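/- arXiv:2012.06676 — 2 statements merged into one kernel-verified Lean document; each statement's English description precedes it below -/
import Mathlib

section
/- Let θ₄(q) = Σ_{n∈ℤ} (−1)^n q^{n²} and E(q) = (q;q)_∞. Then U_{5,3}( θ₄(q) E(q) ) = 2 J_5 J_{5,1} J_{10,3} / J_{5,2}, where the J-products are in the variable q. -/
/-!
By Euler's pentagonal number theorem, `θ₄(q) E(q)` is the double series of
`(-1)^(m+n) q^(m² + n(3n-1)/2)`. Squares are `0, 1, 4` and pentagonal numbers are `0, 1, 2` modulo
`5`, so an exponent is `≡ 3 (mod 5)` only if `m² ≡ 1` and `n(3n-1)/2 ≡ 2`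
(`hasSum_coef_progression`). Hence the extracted series is a product of two simple theta series.

* `m = ±(5k+1)` gives `-2 Σ (-1)^k q^(5k²+2k) = -2 J_{10,3}` (`hasSum_thetaPart` and the Jacobi
  triple product).
* `n = 5k-1` and `n = 5k+3` give `-V` with
  `V = Σ (-1)^k (q^((15k²-7k)/2) + q^((15k²+17k+4)/2))` (`hasSum_eulerPart`), and
  `J_{5,2} V = J_5 J_{5,1}` is an instance of the quintuple product identity (`quintuple`).

The Jacobi triple product (`jacobi_triple`) is the limit of its finite form `hasSum_finite_triple`,
which is proved by induction on the number of factors. The quintuple product is obtained by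
comparing double theta series of the quadratic form `X² + 3Y²`.

The hypothesis on `a` is an equation with a `tsum`, which could a priori hold through
non-summability; `coeff_unique` shows that it does determine `a`, because `θ₄(0) E(0) = 1 ≠ 0`.
-/


/-- The q-Pochhammer symbol `(a;q)_∞ = ∏_{k≥0} (1 - a q^k)`. -/
noncomputable def qPochInf (a q : ℂ) : ℂ := ∏' k : ℕ, (1 - a * q ^ k)

/-- `Jba b a q` is `J_{b,a} = j(q^a;q^b) = (q^a;q^b)_∞ (q^{b-a};q^b)_∞ (q^b;q^b)_∞`. -/
noncomputable def Jba (b a : ℕ) (q : ℂ) : ℂ :=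
  qPochInf (q ^ a) (q ^ b) * qPochInf (q ^ (b - a)) (q ^ b) * qPochInf (q ^ b) (q ^ b)

/-- `Jb b q` is `J_b = (q^b;q^b)_∞`. -/
noncomputable def Jb (b : ℕ) (q : ℂ) : ℂ := qPochInf (q ^ b) (q ^ b)

/-- The theta function θ₄(q) = Σ_{n∈ℤ} (−1)^n q^{n²}. -/
noncomputable def theta4 (q : ℂ) : ℂ := ∑' n : ℤ, (-1 : ℂ) ^ n * q ^ (n ^ 2)

/-! ### The Jacobi triple product -/

/-- The triangular number `n (n - 1) / 2`; the floor division is exact. -/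
def tri (n : ℤ) : ℤ := n * (n - 1) / 2

lemma two_mul_tri (n : ℤ) : 2 * tri n = n * (n - 1) := by
  unfold tri
  exact Int.two_mul_ediv_two_of_even (by simpa using Int.even_mul_pred_self n)

lemma tri_succ (n : ℤ) : tri (n + 1) = tri n + n := by
  have h1 := two_mul_tri n
  have h2 := two_mul_tri (n + 1)
  have : 2 * tri (n + 1) = 2 * (tri n + n) := by linear_combination h2 - h1
  omega

/-- The general term of the theta series of `j(z;q)`. -/
noncomputable def jt (q z : ℂ) (n : ℤ) : ℂ := (-1) ^ n * q ^ tri n * z ^ n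

lemma jt_succ {q z : ℂ} (hq : q ≠ 0) (hz : z ≠ 0) (n : ℤ) :
    jt q z (n + 1) = -(z * q ^ n) * jt q z n := by
  unfold jt
  rw [tri_succ, zpow_add₀ hq, zpow_add_one₀ hz, zpow_add_one₀ (by norm_num)]
  ring

/-- The finite product `(q;q)_n`. -/
noncomputable def qfac (q : ℂ) (n : ℕ) : ℂ := ∏ i ∈ Finset.range n, (1 - q ^ (i + 1))

lemma one_sub_pow_ne_zero {q : ℂ} (hq : ‖q‖ < 1) (n : ℕ) : 1 - q ^ (n + 1) ≠ 0 := by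
  intro h
  have h1 : ‖q ^ (n + 1)‖ < 1 := by
    rw [norm_pow]; exact pow_lt_one₀ (norm_nonneg _) hq (by omega)
  rw [← sub_eq_zero.mp h] at h1
  simp at h1

lemma qfac_ne_zero {q : ℂ} (hq : ‖q‖ < 1) (n : ℕ) : qfac q n ≠ 0 :=
  Finset.prod_ne_zero_iff.mpr fun i _ => one_sub_pow_ne_zero hq i

/-- `1 / (q;q)_m` for `m : ℤ`, read as `0` when `m < 0`. With this convention
`rcp_sub_one` holds for every integer `m`. -/
noncomputable def rcp (q : ℂ) (m : ℤ) : ℂ := if 0 ≤ m then (qfac q m.toNat)⁻¹ else 0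

lemma rcp_sub_one {q : ℂ} (hq : ‖q‖ < 1) (m : ℤ) : rcp q (m - 1) = (1 - q ^ m) * rcp q m := by
  rcases lt_trichotomy m 0 with h | h | h
  · simp [rcp, show ¬ (1 ≤ m) by omega, show ¬ (0 ≤ m) by omega]
  · simp [rcp, h]
  · obtain ⟨k, rfl⟩ : ∃ k : ℕ, m = k + 1 := ⟨(m - 1).toNat, by omega⟩
    have h1 : ((k : ℤ) + 1).toNat = k + 1 := by omega
    have h2 : (0 : ℤ) ≤ k + 1 := by omega
    have h3 := one_sub_pow_ne_zero hq k
    have h4 := qfac_ne_zero hq k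
    simp only [rcp, add_sub_cancel_right, h1, h2, if_true, Int.toNat_natCast,
      Int.natCast_nonneg]
    rw [show qfac q (k + 1) = qfac q k * (1 - q ^ (k + 1)) from Finset.prod_range_succ _ _]
    rw [show q ^ ((k : ℤ) + 1) = q ^ (k + 1) by exact_mod_cast zpow_natCast q (k + 1)]
    field_simp

lemma HasSum.of_eq {ι : Type*} {f g : ι → ℂ} {a b : ℂ} (h : HasSum f a) (hf : ∀ n, g n = f n)
    (hb : b = a) : HasSum g b := by
  rw [hb, show g = f from funext hf]
  exact h

/-- A finite form of the triple product: multiplying by one more factor `1 - z q^M` or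
`1 - q^(K+1) / z` corresponds to the `q`-Pascal rule for the coefficients. -/
lemma hasSum_finite_triple {q z : ℂ} (hq : ‖q‖ < 1) (hq0 : q ≠ 0) (hz : z ≠ 0) (M K : ℕ) :
    HasSum (fun n : ℤ => rcp q (M - n) * rcp q (K + n) * jt q z n)
      ((∏ k ∈ Finset.range M, (1 - z * q ^ k)) * (∏ k ∈ Finset.range K, (1 - q / z * q ^ k))
        / qfac q (M + K)) := by
  induction M with
  | zero =>
    induction K with
    | zero =>
      have : HasSum (fun n : ℤ => rcp q ((0 : ℕ) - n) * rcp q ((0 : ℕ) + n) * jt q z n)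
          (rcp q ((0 : ℕ) - 0) * rcp q ((0 : ℕ) + 0) * jt q z 0) := by
        apply hasSum_single
        intro n hn
        rcases lt_or_gt_of_ne hn with h | h
        · simp [rcp, show ¬ (0 ≤ n) by omega]
        · simp [rcp, show ¬ (n ≤ 0) by omega]
      simpa [rcp, qfac, jt, tri] using this
    | succ K ih =>
      have h1 := (((Equiv.addRight (1 : ℤ)).hasSum_iff.mpr ih).mul_left (-(q / z * q ^ K))).add ih
      have h2 := h1.mul_left (1 - q ^ (K + 1))⁻¹
      have h3 := one_sub_pow_ne_zero hq K
      have h4 := qfac_ne_zero hq K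
      refine h2.of_eq (fun n => ?_) ?_
      · simp only [Function.comp, Equiv.coe_addRight]
        rw [jt_succ hq0 hz]
        have e1 := rcp_sub_one hq (-n)
        have e2 := rcp_sub_one hq (K + 1 + n)
        rw [show (K : ℤ) + 1 + n - 1 = K + n by ring] at e2
        simp only [Nat.cast_zero, zero_sub, Nat.cast_add, Nat.cast_one]
        rw [show -(n + 1) = -n - 1 by ring, show (K : ℤ) + (n + 1) = K + 1 + n by ring, e1, e2]
        rw [zpow_add₀ hq0, zpow_neg, show q ^ ((K : ℤ) + 1) = q ^ (K + 1) by
          exact_mod_cast zpow_natCast q (K + 1)]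
        have := zpow_ne_zero n hq0
        field_simp
        ring
      · rw [Finset.prod_range_succ, zero_add, zero_add,
          show qfac q (K + 1) = qfac q K * (1 - q ^ (K + 1)) from Finset.prod_range_succ _ _]
        field_simp
        ring
  | succ M ih =>
    have h1 := (((Equiv.addRight (-1 : ℤ)).hasSum_iff.mpr ih).mul_left (-(z * q ^ M))).add ih
    have h2 := h1.mul_left (1 - q ^ (M + K + 1))⁻¹
    have h3 := one_sub_pow_ne_zero hq (M + K)
    have h4 := qfac_ne_zero hq (M + K)
    refine h2.of_eq (fun n => ?_) ?_
    · simp only [Function.comp, Equiv.coe_addRight]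
      obtain ⟨n, rfl⟩ : ∃ k, n = k + 1 := ⟨n - 1, by ring⟩
      rw [show n + 1 + -1 = n by ring, jt_succ hq0 hz]
      have e1 := rcp_sub_one hq (M - n)
      have e2 := rcp_sub_one hq (K + 1 + n)
      rw [show (K : ℤ) + 1 + n - 1 = K + n by ring] at e2
      push_cast
      rw [show (M : ℤ) - (n + 1) = M - n - 1 by ring, show (K : ℤ) + (n + 1) = K + 1 + n by ring,
        show (M : ℤ) + 1 - (n + 1) = M - n by ring, e1, e2]
      rw [zpow_add₀ hq0, zpow_sub₀ hq0, show q ^ ((K : ℤ) + 1) = q ^ (K + 1) by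
        exact_mod_cast zpow_natCast q (K + 1), zpow_natCast]
      have := zpow_ne_zero n hq0
      field_simp
      ring
    · rw [Finset.prod_range_succ, show M + 1 + K = M + K + 1 by ring,
        show qfac q (M + K + 1) = qfac q (M + K) * (1 - q ^ (M + K + 1)) from
          Finset.prod_range_succ _ _]
      field_simp
      ring

lemma summable_jt {q z : ℂ} (hq : ‖q‖ < 1) (hq0 : q ≠ 0) (hz : z ≠ 0) :
    Summable fun n : ℤ => ‖jt q z n‖ := by
  have hne : ∀ n, jt q z n ≠ 0 := fun n => by
    unfold jt
    exact mul_ne_zero (mul_ne_zero (zpow_ne_zero _ (by norm_num)) (zpow_ne_zero _ hq0))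
      (zpow_ne_zero _ hz)
  have hpow : Filter.Tendsto (fun n : ℕ => ‖q‖ ^ n) Filter.atTop (nhds 0) :=
    tendsto_pow_atTop_nhds_zero_of_lt_one (norm_nonneg _) hq
  apply Summable.of_nat_of_neg_add_one
  · refine summable_of_ratio_test_tendsto_lt_one (l := 0) one_pos
      (Filter.Eventually.of_forall fun n => norm_ne_zero_iff.mpr (hne _)) ?_
    have : Filter.Tendsto (fun n : ℕ => ‖z‖ * ‖q‖ ^ n) Filter.atTop (nhds 0) := by
      simpa using hpow.const_mul ‖z‖
    refine this.congr fun n => ?_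
    have := norm_ne_zero_iff.mpr (hne n)
    push_cast
    rw [jt_succ hq0 hz]
    simp only [norm_norm, norm_mul, norm_neg, norm_pow, zpow_natCast]
    field_simp
  · refine summable_of_ratio_test_tendsto_lt_one (l := 0) one_pos
      (Filter.Eventually.of_forall fun n => norm_ne_zero_iff.mpr (hne _)) ?_
    have : Filter.Tendsto (fun n : ℕ => ‖z‖⁻¹ * ‖q‖ ^ 2 * ‖q‖ ^ n) Filter.atTop (nhds 0) := by
      simpa using hpow.const_mul (‖z‖⁻¹ * ‖q‖ ^ 2)
    refine this.congr fun n => ?_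
    have h1 := norm_ne_zero_iff.mpr (hne (-((n : ℤ) + 1 + 1)))
    have h2 := jt_succ hq0 hz (-((n : ℤ) + 1 + 1))
    rw [show -((n : ℤ) + 1 + 1) + 1 = -(n + 1) by ring] at h2
    push_cast
    rw [h2]
    have hq1 : ‖q‖ ≠ 0 := norm_ne_zero_iff.mpr hq0
    have hz1 : ‖z‖ ≠ 0 := norm_ne_zero_iff.mpr hz
    simp only [norm_norm, norm_mul, norm_neg, zpow_neg, norm_inv]
    rw [norm_zpow]
    rw [show ‖q‖ ^ ((n : ℤ) + 1 + 1) = ‖q‖ ^ (n + 2) by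
      exact_mod_cast zpow_natCast ‖q‖ (n + 2)]
    field_simp
    ring

lemma summable_geom {q : ℂ} (hq : ‖q‖ < 1) (x : ℂ) : Summable fun k : ℕ => ‖-(x * q ^ k)‖ := by
  simp only [norm_neg, norm_mul, norm_pow]
  exact (summable_geometric_of_lt_one (norm_nonneg _) hq).mul_left _

lemma multipliable_qPoch {q : ℂ} (hq : ‖q‖ < 1) (x : ℂ) :
    Multipliable fun k : ℕ => 1 - x * q ^ k := by
  simpa [sub_eq_add_neg] using multipliable_one_add_of_summable (summable_geom hq x)

lemma tendsto_qPoch {q : ℂ} (hq : ‖q‖ < 1) (x : ℂ) :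
    Filter.Tendsto (fun N => ∏ k ∈ Finset.range N, (1 - x * q ^ k)) Filter.atTop
      (nhds (qPochInf x q)) :=
  (multipliable_qPoch hq x).tendsto_prod_tprod_nat

lemma qPochInf_ne_zero {q x : ℂ} (hq : ‖q‖ < 1) (hx : ‖x‖ < 1) : qPochInf x q ≠ 0 := by
  unfold qPochInf
  have := tprod_one_add_ne_zero_of_summable (f := fun k : ℕ => -(x * q ^ k)) (fun k => ?_)
    (summable_geom hq x)
  · simpa [sub_eq_add_neg] using this
  · intro h
    have h1 : ‖x * q ^ k‖ < 1 := by
      rw [norm_mul, norm_pow]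
      calc ‖x‖ * ‖q‖ ^ k ≤ ‖x‖ * 1 := by
            gcongr; exact pow_le_one₀ (norm_nonneg _) hq.le
        _ < 1 := by simpa using hx
    rw [← sub_eq_add_neg, sub_eq_zero] at h
    rw [← h] at h1
    simp at h1

lemma tendsto_qfac {q : ℂ} (hq : ‖q‖ < 1) :
    Filter.Tendsto (qfac q) Filter.atTop (nhds (qPochInf q q)) := by
  refine (tendsto_qPoch hq q).congr fun N => ?_
  exact Finset.prod_congr rfl fun i _ => by ring

lemma tendsto_intToNat_atTop : Filter.Tendsto Int.toNat Filter.atTop Filter.atTop :=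
  Filter.tendsto_atTop_atTop.mpr fun b => ⟨b, fun a h => by omega⟩

lemma tendsto_rcp {q : ℂ} (hq : ‖q‖ < 1) :
    Filter.Tendsto (rcp q) Filter.atTop (nhds (qPochInf q q)⁻¹) := by
  have h1 := ((tendsto_qfac hq).inv₀ (qPochInf_ne_zero hq hq)).comp tendsto_intToNat_atTop
  refine h1.congr' ?_
  filter_upwards [Filter.eventually_ge_atTop 0] with m hm
  simp [rcp, hm]

lemma rcp_bounded {q : ℂ} (hq : ‖q‖ < 1) : ∃ C, 0 ≤ C ∧ ∀ m, ‖rcp q m‖ ≤ C := by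
  obtain ⟨C, hC⟩ :=
    (((tendsto_qfac hq).inv₀ (qPochInf_ne_zero hq hq)).norm).bddAbove_range
  have h0 : 0 ≤ C := (norm_nonneg _).trans (hC ⟨0, rfl⟩)
  refine ⟨C, h0, fun m => ?_⟩
  unfold rcp
  split_ifs
  · exact hC ⟨_, rfl⟩
  · simpa using h0

/-- The **Jacobi triple product**, the limit `M = K → ∞` of the finite form by dominated
convergence. -/
lemma jacobi_triple {q z : ℂ} (hq : ‖q‖ < 1) (hq0 : q ≠ 0) (hz : z ≠ 0) :
    HasSum (jt q z) (qPochInf z q * qPochInf (q / z) q * qPochInf q q) := by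
  have hs := summable_jt hq hq0 hz
  have hE := qPochInf_ne_zero hq hq
  obtain ⟨C, hC0, hC⟩ := rcp_bounded hq
  have hlim := tendsto_tsum_of_dominated_convergence
    (f := fun (N : ℕ) (n : ℤ) => rcp q (N - n) * rcp q (N + n) * jt q z n)
    (g := fun n => (qPochInf q q)⁻¹ * (qPochInf q q)⁻¹ * jt q z n)
    (bound := fun n => C * C * ‖jt q z n‖) (𝓕 := Filter.atTop) (hs.mul_left _) ?_ ?_
  · have hlim2 : Filter.Tendsto
        (fun N : ℕ => ∑' n : ℤ, rcp q (N - n) * rcp q (N + n) * jt q z n) Filter.atTop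
        (nhds (qPochInf z q * qPochInf (q / z) q / qPochInf q q)) := by
      simp_rw [(hasSum_finite_triple hq hq0 hz _ _).tsum_eq]
      refine ((tendsto_qPoch hq z).mul (tendsto_qPoch hq (q / z))).div ?_ hE
      exact (tendsto_qfac hq).comp
        (Filter.tendsto_atTop_mono (fun N => Nat.le_add_left N N) Filter.tendsto_id)
    have h := tendsto_nhds_unique hlim hlim2
    rw [tsum_mul_left] at h
    have h' : ∑' n, jt q z n = qPochInf z q * qPochInf (q / z) q * qPochInf q q := by
      field_simp at h
      linear_combination h
    rw [← h']
    exact hs.of_norm.hasSum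
  · intro n
    refine Filter.Tendsto.mul_const _ (Filter.Tendsto.mul ?_ ?_)
    · exact (tendsto_rcp hq).comp
        (Filter.tendsto_atTop_add_const_right _ (-n) tendsto_natCast_atTop_atTop)
    · exact (tendsto_rcp hq).comp
        (Filter.tendsto_atTop_add_const_right _ n tendsto_natCast_atTop_atTop)
  · refine Filter.Eventually.of_forall fun N n => ?_
    rw [norm_mul, norm_mul]
    gcongr <;> exact hC _

/-! ### Theta products as theta series -/

lemma norm_pow_lt_one {q : ℂ} (hq : ‖q‖ < 1) {b : ℕ} (hb : 0 < b) : ‖q ^ b‖ < 1 := by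
  rw [norm_pow]; exact pow_lt_one₀ (norm_nonneg _) hq hb.ne'

lemma hasSum_Jba {q : ℂ} (hq : ‖q‖ < 1) (hq0 : q ≠ 0) {b a : ℕ} (hb : 0 < b) (hab : a ≤ b) :
    HasSum (jt (q ^ b) (q ^ a)) (Jba b a q) := by
  have := jacobi_triple (norm_pow_lt_one hq hb) (pow_ne_zero b hq0) (pow_ne_zero a hq0)
  rwa [show q ^ b / q ^ a = q ^ (b - a) from (pow_sub₀ q hq0 hab).symm ▸ by
    rw [div_eq_mul_inv]] at this

lemma summable_jt_pow {q : ℂ} (hq : ‖q‖ < 1) (hq0 : q ≠ 0) {b : ℕ} (hb : 0 < b) (a : ℕ) :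
    Summable fun n => ‖jt (q ^ b) (q ^ a) n‖ :=
  summable_jt (norm_pow_lt_one hq hb) (pow_ne_zero b hq0) (pow_ne_zero a hq0)

/-- Splitting `(q;q)_∞` by the residue of the index modulo `3`; with the triple product this
gives Euler's pentagonal number theorem. -/
lemma qPochInf_self {q : ℂ} (hq : ‖q‖ < 1) : qPochInf q q = Jba 3 1 q := by
  have h3 := norm_pow_lt_one hq (b := 3) (by norm_num)
  have h1 : Filter.Tendsto (fun N : ℕ => ∏ k ∈ Finset.range (3 * N), (1 - q * q ^ k))
      Filter.atTop (nhds (qPochInf q q)) :=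
    (tendsto_qPoch hq q).comp
      (Filter.tendsto_atTop_mono (fun N => show N ≤ 3 * N by omega) Filter.tendsto_id)
  have h2 : Filter.Tendsto (fun N : ℕ => ∏ k ∈ Finset.range (3 * N), (1 - q * q ^ k))
      Filter.atTop (nhds (Jba 3 1 q)) := by
    refine (((tendsto_qPoch h3 (q ^ 1)).mul (tendsto_qPoch h3 (q ^ (3 - 1)))).mul
      (tendsto_qPoch h3 (q ^ 3))).congr fun N => ?_
    induction N with
    | zero => simp
    | succ N ih =>
      rw [show 3 * (N + 1) = 3 * N + 1 + 1 + 1 by ring]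
      simp only [Finset.prod_range_succ]
      rw [← ih]
      simp only [Nat.add_one_sub_one]
      ring
  exact tendsto_nhds_unique h1 h2

/-! ### The quintuple product at base `q^5` -/

lemma jt_mul_jt {q : ℂ} (hq0 : q ≠ 0) (b a b' a' : ℕ) (m n : ℤ) :
    jt (q ^ b) (q ^ a) m * jt (q ^ b') (q ^ a') n =
      (-1) ^ (m + n) * q ^ (b * tri m + a * m + b' * tri n + a' * n) := by
  unfold jt
  simp only [← zpow_natCast q, ← zpow_mul]
  rw [zpow_add₀ hq0, zpow_add₀ hq0, zpow_add₀ hq0, zpow_add₀ (by norm_num)]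
  ring

lemma neg_one_zpow_congr {s t : ℤ} (r : ℤ) (h : s = t + 2 * r) : (-1 : ℂ) ^ s = (-1) ^ t := by
  rw [h, zpow_add₀ (by norm_num), zpow_mul]; norm_num

/-- A sum over `ℤ²` split according to the parity of the coordinate sum. -/
lemma tsum_split_parity {f : ℤ × ℤ → ℂ} (hf : Summable f) :
    ∑' p, f p = ∑' p : ℤ × ℤ, f (p.1, 2 * p.2 - p.1) +
      ∑' p : ℤ × ℤ, f (p.1, 2 * p.2 + 1 - p.1) := by
  set e₁ : ℤ × ℤ → ℤ × ℤ := fun p => (p.1, 2 * p.2 - p.1) with he₁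
  set e₂ : ℤ × ℤ → ℤ × ℤ := fun p => (p.1, 2 * p.2 + 1 - p.1) with he₂
  have i₁ : Function.Injective e₁ := by
    rintro ⟨a, b⟩ ⟨c, d⟩ h
    simp only [he₁, Prod.mk.injEq] at h ⊢
    omega
  have i₂ : Function.Injective e₂ := by
    rintro ⟨a, b⟩ ⟨c, d⟩ h
    simp only [he₂, Prod.mk.injEq] at h ⊢
    omega
  have hc : IsCompl (Set.range e₁) (Set.range e₂) := by
    refine ⟨Set.disjoint_left.mpr ?_, codisjoint_iff.mpr (Set.eq_univ_of_forall ?_)⟩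
    · rintro _ ⟨⟨x, y⟩, rfl⟩ ⟨⟨x', y'⟩, h⟩
      simp only [he₁, he₂, Prod.mk.injEq] at h
      omega
    · rintro ⟨a, b⟩
      rcases Int.even_or_odd' (a + b) with ⟨k, h | h⟩
      · exact Or.inl ⟨(a, k), by simp only [he₁, Prod.mk.injEq, true_and]; omega⟩
      · exact Or.inr ⟨(a, k), by simp only [he₂, Prod.mk.injEq, true_and]; omega⟩
  have h₁ := i₁.hasSum_range_iff.mpr (hf.comp_injective i₁).hasSum
  have h₂ := i₂.hasSum_range_iff.mpr (hf.comp_injective i₂).hasSum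
  exact (h₁.add_isCompl hc h₂).tsum_eq

/-- The quintuple product identity specialised to base `q^5` and argument `q^2`, i.e.
`J_5 J_{5,1} = J_{5,2} V`. Both sides are theta series of the form `X² + 3Y²`; splitting all
double series by parity of the coordinate sum, isometries of that form identify the two halves of
the left side with one half of each series on the right, and the two remaining halves cancel. -/
lemma quintuple {q : ℂ} (hq : ‖q‖ < 1) (hq0 : q ≠ 0) :
    Jb 5 q * Jba 5 1 q = Jba 5 2 q *
      (∑' k, jt (q ^ 15) (q ^ 4) k + q ^ 2 * ∑' k, jt (q ^ 15) (q ^ 16) k) := by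
  have h5 : HasSum (jt (q ^ 15) (q ^ 5)) (Jb 5 q) := by
    have h := hasSum_Jba (norm_pow_lt_one hq (b := 5) (by norm_num)) (pow_ne_zero 5 hq0)
      (b := 3) (a := 1) (by norm_num) (by norm_num)
    rw [← qPochInf_self (norm_pow_lt_one hq (b := 5) (by norm_num)), ← pow_mul, ← pow_mul] at h
    exact h
  have h51 := hasSum_Jba hq hq0 (b := 5) (a := 1) (by norm_num) (by norm_num)
  have h52 := hasSum_Jba hq hq0 (b := 5) (a := 2) (by norm_num) (by norm_num)
  have s5 := summable_jt_pow hq hq0 (b := 15) (by norm_num) 5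
  have s51 := summable_jt_pow hq hq0 (b := 5) (by norm_num) 1
  have s52 := summable_jt_pow hq hq0 (b := 5) (by norm_num) 2
  have s4 := summable_jt_pow hq hq0 (b := 15) (by norm_num) 4
  have s16 := summable_jt_pow hq hq0 (b := 15) (by norm_num) 16
  set L : ℤ × ℤ → ℂ := fun p => jt (q ^ 15) (q ^ 5) p.1 * jt (q ^ 5) (q ^ 1) p.2 with hL
  set F₁ : ℤ × ℤ → ℂ := fun p => jt (q ^ 5) (q ^ 2) p.1 * jt (q ^ 15) (q ^ 4) p.2 with hF₁
  set F₂ : ℤ × ℤ → ℂ := fun p => jt (q ^ 5) (q ^ 2) p.1 * jt (q ^ 15) (q ^ 16) p.2 with hF₂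
  rw [← h5.tsum_eq, ← h51.tsum_eq, ← h52.tsum_eq, mul_add, mul_left_comm,
    tsum_mul_tsum_of_summable_norm s5 s51, tsum_mul_tsum_of_summable_norm s52 s4,
    tsum_mul_tsum_of_summable_norm s52 s16,
    tsum_split_parity (f := L) (summable_mul_of_summable_norm s5 s51),
    tsum_split_parity (f := F₁) (summable_mul_of_summable_norm s52 s4),
    tsum_split_parity (f := F₂) (summable_mul_of_summable_norm s52 s16)]
  have key : ∀ s e : ℤ, q ^ 2 * ((-1) ^ s * q ^ e) = (-1) ^ s * q ^ (e + 2) := fun s e => by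
    rw [zpow_add₀ hq0]; norm_cast; ring
  -- The affine bijections of `ℤ²`, in the coordinates of the parity classes, that the isometries
  -- of `X² + 3Y²` induce between matching halves.
  let ε₁ : ℤ × ℤ ≃ ℤ × ℤ := ⟨fun p => (2 * p.1 - p.2, p.1), fun p => (p.2, 2 * p.2 - p.1),
    fun p => by simp, fun p => by simp⟩
  let ε₂ : ℤ × ℤ ≃ ℤ × ℤ := ⟨fun p => (-p.1 - p.2, -p.2 - 1), fun p => (p.2 + 1 - p.1, -p.2 - 1),
    fun p => by ext <;> simp only <;> ring, fun p => by ext <;> simp only <;> ring⟩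
  let ε₃ : ℤ × ℤ ≃ ℤ × ℤ := ⟨fun p => (p.1 - 3 * p.2 - 1, p.1 - 2 * p.2 - 1),
    fun p => (3 * p.2 - 2 * p.1 + 1, p.2 - p.1),
    fun p => by ext <;> simp only <;> ring, fun p => by ext <;> simp only <;> ring⟩
  have e₁ : ∑' p : ℤ × ℤ, L (p.1, 2 * p.2 - p.1) = ∑' p : ℤ × ℤ, F₁ (p.1, 2 * p.2 - p.1) := by
    rw [← ε₁.tsum_eq (fun p : ℤ × ℤ => F₁ (p.1, 2 * p.2 - p.1))]
    refine tsum_congr fun ⟨u, v⟩ => ?_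
    simp only [hL, hF₁, ε₁, Equiv.coe_fn_mk, jt_mul_jt hq0]
    congr 1
    · exact neg_one_zpow_congr (v - u) (by ring)
    · congr 1
      have h1 := two_mul_tri u
      have h2 := two_mul_tri (2 * v - u)
      have h3 := two_mul_tri (2 * u - v)
      have h4 := two_mul_tri (2 * u - (2 * u - v))
      push_cast
      rw [← mul_right_inj' (two_ne_zero : (2 : ℤ) ≠ 0)]
      linear_combination 15 * h1 + 5 * h2 - 5 * h3 - 15 * h4
  have e₂ : ∑' p : ℤ × ℤ, L (p.1, 2 * p.2 + 1 - p.1) =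
      q ^ 2 * ∑' p : ℤ × ℤ, F₂ (p.1, 2 * p.2 + 1 - p.1) := by
    rw [← ε₂.tsum_eq (fun p : ℤ × ℤ => F₂ (p.1, 2 * p.2 + 1 - p.1)), ← tsum_mul_left]
    refine tsum_congr fun ⟨u, v⟩ => ?_
    simp only [hL, hF₂, ε₂, Equiv.coe_fn_mk, jt_mul_jt hq0, key]
    congr 1
    · exact neg_one_zpow_congr (2 * v + 1) (by ring)
    · congr 1
      have h1 := two_mul_tri u
      have h2 := two_mul_tri (2 * v + 1 - u)
      have h3 := two_mul_tri (-u - v)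
      have h4 := two_mul_tri (2 * (-v - 1) + 1 - (-u - v))
      push_cast
      rw [← mul_right_inj' (two_ne_zero : (2 : ℤ) ≠ 0)]
      linear_combination 15 * h1 + 5 * h2 - 5 * h3 - 15 * h4
  have e₃ : ∑' p : ℤ × ℤ, F₁ (p.1, 2 * p.2 + 1 - p.1) =
      -(q ^ 2 * ∑' p : ℤ × ℤ, F₂ (p.1, 2 * p.2 - p.1)) := by
    rw [← ε₃.tsum_eq (fun p : ℤ × ℤ => F₂ (p.1, 2 * p.2 - p.1)), ← tsum_mul_left, ← tsum_neg]
    refine tsum_congr fun ⟨u, v⟩ => ?_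
    simp only [hF₁, hF₂, ε₃, Equiv.coe_fn_mk, jt_mul_jt hq0, key]
    rw [← neg_mul, ← neg_one_mul ((-1 : ℂ) ^ _), ← zpow_one_add₀ (by norm_num : (-1 : ℂ) ≠ 0)]
    congr 1
    · exact neg_one_zpow_congr (3 * v + 1 - u) (by ring)
    · congr 1
      have h1 := two_mul_tri u
      have h2 := two_mul_tri (2 * v + 1 - u)
      have h3 := two_mul_tri (u - 3 * v - 1)
      have h4 := two_mul_tri (2 * (u - 2 * v - 1) - (u - 3 * v - 1))
      push_cast
      rw [← mul_right_inj' (two_ne_zero : (2 : ℤ) ≠ 0)]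
      linear_combination 5 * h1 + 15 * h2 - 5 * h3 - 15 * h4
  rw [e₁, e₂, e₃]
  ring
/-! ### Uniqueness of coefficients -/

lemma hasFPowerSeriesAt_of_hasSum {c : ℕ → ℂ} {f : ℂ → ℂ} {r : ℝ} (hr : 0 < r)
    (h : ∀ y : ℂ, ‖y‖ < r → HasSum (fun n => c n * y ^ n) (f y)) :
    HasFPowerSeriesAt f (FormalMultilinearSeries.ofScalars ℂ c) 0 := by
  have hr2 : 0 < r / 2 := by positivity
  refine ⟨((r / 2).toNNReal : ENNReal), ?_, by simpa using hr2, fun {y} hy => ?_⟩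
  · apply FormalMultilinearSeries.le_radius_of_summable_norm
    have h1 := (h ((r / 2 : ℝ) : ℂ) (by
      rw [Complex.norm_real, Real.norm_of_nonneg hr2.le]; linarith)).summable.norm
    refine h1.congr fun n => ?_
    rw [FormalMultilinearSeries.ofScalars_norm, norm_mul, norm_pow, Complex.norm_real,
      Real.norm_of_nonneg hr2.le, Real.coe_toNNReal _ hr2.le]
  · have hy' : ‖y‖ < r / 2 := by
      rcases (by simpa using hy : ‖y‖ < r / 2 ∨ ‖y‖ < 0) with h | h
      · exact h
      · linarith [norm_nonneg y]
    have := h y (by linarith)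
    simpa [FormalMultilinearSeries.ofScalars_apply_eq, mul_comm] using this

/-- A power series expansion valid on the unit disc determines the coefficients, even if for `a`
only the `tsum` equation is known: since `f` does not vanish near `0`, the `tsum` is nonzero, hence
`a n x^n` is summable, at some `x ≠ 0`. -/
lemma coeff_unique {a b : ℕ → ℂ} {f : ℂ → ℂ}
    (ha : ∀ x : ℂ, ‖x‖ < 1 → f x = ∑' n, a n * x ^ n)
    (hb : ∀ x : ℂ, ‖x‖ < 1 → HasSum (fun n => b n * x ^ n) (f x)) (h0 : f 0 ≠ 0) : a = b := by
  have pb := hasFPowerSeriesAt_of_hasSum one_pos hb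
  obtain ⟨ε, hε, hne⟩ := Metric.eventually_nhds_iff.mp (pb.continuousAt.eventually_ne h0)
  set s : ℝ := min (ε / 2) (1 / 2) with hs
  have hs0 : 0 < s := by positivity
  have hs1 : s ≤ 1 / 2 := min_le_right _ _
  have hs2 : s ≤ ε / 2 := min_le_left _ _
  have hns : ‖(s : ℂ)‖ = s := by rw [Complex.norm_real, Real.norm_of_nonneg hs0.le]
  have hsum : Summable fun n => a n * (s : ℂ) ^ n := by
    by_contra hcon
    refine hne (y := (s : ℂ)) (by rw [dist_zero_right, hns]; linarith) ?_
    rw [ha _ (by rw [hns]; linarith), tsum_eq_zero_of_not_summable hcon]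
  have pa : HasFPowerSeriesAt f (FormalMultilinearSeries.ofScalars ℂ a) 0 := by
    refine hasFPowerSeriesAt_of_hasSum hs0 fun y hy => ?_
    rw [ha y (by linarith)]
    refine Summable.hasSum (.of_norm_bounded hsum.norm fun n => ?_)
    rw [norm_mul, norm_mul, norm_pow, norm_pow, hns]
    gcongr
  exact FormalMultilinearSeries.ofScalars_series_injective ℂ ℂ
    (pa.eq_formalMultilinearSeries pb)

/-! ### Theta series with natural exponents

Natural-number exponents make these series meaningful at `q = 0` as well. -/

lemma theta_term {g : ℤ → ℕ} {b a c : ℕ} (hg : ∀ n, (g n : ℤ) = b * tri n + a * n + c) {x : ℂ}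
    (hx : x ≠ 0) (n : ℤ) : (-1) ^ n * x ^ g n = x ^ c * jt (x ^ b) (x ^ a) n := by
  unfold jt
  rw [← zpow_natCast x (g n), hg, zpow_add₀ hx, zpow_add₀ hx, zpow_mul, zpow_mul]
  simp only [zpow_natCast]
  ring

lemma summable_theta {g : ℤ → ℕ} {b a c : ℕ} (hb : 0 < b)
    (hg : ∀ n, (g n : ℤ) = b * tri n + a * n + c) {x : ℂ} (hx : ‖x‖ < 1) :
    Summable fun n => ‖(-1) ^ n * x ^ g n‖ := by
  have hy0 : (0 : ℝ) < (‖x‖ + 1) / 2 := by positivity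
  have hny : ‖(((‖x‖ + 1) / 2 : ℝ) : ℂ)‖ = (‖x‖ + 1) / 2 := by
    rw [Complex.norm_real, Real.norm_of_nonneg hy0.le]
  set y : ℂ := (((‖x‖ + 1) / 2 : ℝ) : ℂ)
  have hyne : y ≠ 0 := by rw [← norm_pos_iff, hny]; exact hy0
  have h := (summable_jt_pow (by rw [hny]; linarith) hyne hb a).mul_left ‖y ^ c‖
  refine Summable.of_nonneg_of_le (fun _ => norm_nonneg _) (fun n => ?_) h
  rw [← norm_mul, ← theta_term hg hyne, norm_mul, norm_mul, norm_pow, norm_pow]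
  gcongr
  linarith

lemma hasSum_theta_zero {g : ℤ → ℕ} (hg : ∀ n, g n = 0 ↔ n = 0) :
    HasSum (fun n : ℤ => (-1 : ℂ) ^ n * 0 ^ g n) 1 := by
  have := hasSum_single (f := fun n : ℤ => (-1 : ℂ) ^ n * 0 ^ g n) 0 fun n hn => by
    rw [zero_pow (mt (hg n).mp hn), mul_zero]
  simpa [(hg 0).mpr rfl] using this

lemma qPochInf_zero_pow {b a : ℕ} (ha : 0 < a) :
    qPochInf ((0 : ℂ) ^ a) (0 ^ b) = 1 := by
  simp [qPochInf, zero_pow ha.ne']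

lemma Jba_zero {b a : ℕ} (ha : 0 < a) (hab : a < b) : Jba b a 0 = 1 := by
  unfold Jba
  rw [qPochInf_zero_pow ha, qPochInf_zero_pow (by omega), qPochInf_zero_pow (by omega)]
  norm_num

/-- The exponent `n²` of `θ₄`, as a natural number. -/
def sqN (n : ℤ) : ℕ := n.natAbs ^ 2

lemma sqN_cast (n : ℤ) : (sqN n : ℤ) = n ^ 2 := by simp [sqN]

lemma sqN_tri (n : ℤ) : (sqN n : ℤ) = (2 : ℕ) * tri n + (1 : ℕ) * n + (0 : ℕ) := by
  have := two_mul_tri n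
  rw [sqN_cast]
  push_cast
  linear_combination -this

lemma pentagonal_tri (n : ℤ) :
    (pentagonal n : ℤ) = (3 : ℕ) * tri n + (1 : ℕ) * n + (0 : ℕ) := by
  have h1 := two_mul_tri n
  have h2 := two_mul_natCast_pentagonal n
  push_cast
  rw [← mul_right_inj' (two_ne_zero : (2 : ℤ) ≠ 0)]
  linear_combination h2 - 3 * h1

lemma hasSum_theta4 {x : ℂ} (hx : ‖x‖ < 1) :
    HasSum (fun n : ℤ => (-1) ^ n * x ^ sqN n) (theta4 x) := by
  have h := (summable_theta (by norm_num) sqN_tri hx).of_norm.hasSum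
  exact h.of_eq (fun _ => rfl) (tsum_congr fun n => by rw [← sqN_cast, zpow_natCast])

lemma hasSum_euler {x : ℂ} (hx : ‖x‖ < 1) :
    HasSum (fun n : ℤ => (-1) ^ n * x ^ pentagonal n) (qPochInf x x) := by
  rcases eq_or_ne x 0 with rfl | hx0
  · rw [show qPochInf (0 : ℂ) 0 = 1 by simpa using qPochInf_zero_pow (b := 1) one_pos]
    refine hasSum_theta_zero fun n => ⟨fun h => ?_, fun h => by subst h; rfl⟩
    have h2 := two_mul_natCast_pentagonal n
    rw [h] at h2
    simp only [Nat.cast_zero, mul_zero, zero_eq_mul] at h2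
    omega
  · rw [qPochInf_self hx]
    refine (hasSum_Jba hx hx0 (b := 3) (a := 1) (by norm_num) (by norm_num)).of_eq
      (fun n => ?_) rfl
    rw [theta_term pentagonal_tri hx0, pow_zero, one_mul]

/-! ### Coefficients of `θ₄ E` and the progression `5n + 3` -/

/-- The exponent of the `(m, n)` term of the double series for `θ₄(q) E(q)`. -/
def expo (p : ℤ × ℤ) : ℕ := sqN p.1 + pentagonal p.2

/-- The coefficient of `q^N` in `θ₄(q) E(q)`, as a sum over the (finite) set of `(m, n)` with
`m² + n (3n - 1) / 2 = N`. -/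
noncomputable def coef (N : ℕ) : ℂ :=
  ∑' p : expo ⁻¹' {N}, (-1) ^ p.1.1 * (-1) ^ p.1.2

lemma hasSum_coef {x : ℂ} (hx : ‖x‖ < 1) :
    HasSum (fun N => coef N * x ^ N) (theta4 x * qPochInf x x) := by
  have hs := summable_mul_of_summable_norm (summable_theta (by norm_num) sqN_tri hx)
    (summable_theta (by norm_num) pentagonal_tri hx)
  have h := ((hasSum_theta4 hx).mul (hasSum_euler hx) hs).tsum_fiberwise expo
  refine h.of_eq (fun N => ?_) rfl
  rw [coef, ← tsum_mul_right]
  refine tsum_congr fun ⟨p, hp⟩ => ?_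
  have e : x ^ N = x ^ sqN p.1 * x ^ pentagonal p.2 := by
    rw [← show expo p = N from hp, expo, pow_add]
  dsimp only
  rw [e]
  ring

lemma sqN_mod (m : ℤ) : sqN m % 5 = 1 ∧ (m % 5 = 1 ∨ m % 5 = 4) ∨
    (sqN m % 5 = 0 ∨ sqN m % 5 = 4) ∧ m % 5 ≠ 1 ∧ m % 5 ≠ 4 := by
  have h := sqN_cast m
  obtain ⟨k, r, hr, hm⟩ : ∃ k r : ℤ, (0 ≤ r ∧ r < 5) ∧ m = 5 * k + r :=
    ⟨m / 5, m % 5, by omega, by omega⟩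
  have h' : (sqN m : ℤ) = 5 * (5 * k ^ 2 + 2 * k * r) + r ^ 2 := by rw [h, hm]; ring
  generalize 5 * k ^ 2 + 2 * k * r = w at h'
  obtain ⟨hr0, hr1⟩ := hr
  interval_cases r <;> omega

lemma pentagonal_mod (n : ℤ) : pentagonal n % 5 = 2 ∧ (n % 5 = 3 ∨ n % 5 = 4) ∨
    (pentagonal n % 5 = 0 ∨ pentagonal n % 5 = 1) ∧ n % 5 ≠ 3 ∧ n % 5 ≠ 4 := by
  have h := two_mul_natCast_pentagonal n
  obtain ⟨k, r, hr, hm⟩ : ∃ k r : ℤ, (0 ≤ r ∧ r < 5) ∧ n = 5 * k + r :=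
    ⟨n / 5, n % 5, by omega, by omega⟩
  have h' : 2 * (pentagonal n : ℤ) = 5 * (15 * k ^ 2 + 6 * k * r - k) + r * (3 * r - 1) := by
    rw [h, hm]; ring
  generalize 15 * k ^ 2 + 6 * k * r - k = w at h'
  obtain ⟨hr0, hr1⟩ := hr
  interval_cases r <;> omega

/-- The terms of `θ₄` with exponent `≡ 1 (mod 5)`, after `q^(5N+1) ↦ q^N`. -/
noncomputable def thetaPart (q : ℂ) (m : ℤ) : ℂ :=
  if sqN m % 5 = 1 then (-1) ^ m * q ^ (sqN m / 5) else 0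

/-- The terms of `E` with exponent `≡ 2 (mod 5)`, after `q^(5N+2) ↦ q^N`. -/
noncomputable def eulerPart (q : ℂ) (n : ℤ) : ℂ :=
  if pentagonal n % 5 = 2 then (-1) ^ n * q ^ (pentagonal n / 5) else 0

/-- Squares are `0, 1, 4` and pentagonal numbers `0, 1, 2` modulo `5`, so an exponent is
`≡ 3 (mod 5)` only as `1 + 2`, and the extracted double series is a product. -/
lemma hasSum_coef_progression {q s t : ℂ} (hs : HasSum (thetaPart q) s)
    (ht : HasSum (eulerPart q) t) :
    HasSum (fun n => coef (5 * n + 3) * q ^ n) (s * t) := by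
  have h := (hs.mul ht (summable_mul_of_summable_norm hs.summable.norm
    ht.summable.norm)).tsum_fiberwise expo
  have inj : Function.Injective fun n : ℕ => 5 * n + 3 := fun a b h => by
    simp only at h; omega
  have h2 : HasSum (fun N => if N % 5 = 3 then coef N * q ^ (N / 5) else 0) (s * t) := by
    refine h.of_eq (fun N => ?_) rfl
    have term : ∀ p : expo ⁻¹' {N}, thetaPart q p.1.1 * eulerPart q p.1.2 =
        (-1) ^ p.1.1 * (-1) ^ p.1.2 * (if N % 5 = 3 then q ^ (N / 5) else 0) := by
      rintro ⟨⟨m, n⟩, hp⟩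
      have hN : sqN m + pentagonal n = N := hp
      simp only [thetaPart, eulerPart]
      by_cases hmn : sqN m % 5 = 1 ∧ pentagonal n % 5 = 2
      · rw [if_pos hmn.1, if_pos hmn.2, if_pos (by omega),
          show N / 5 = sqN m / 5 + pentagonal n / 5 by omega, pow_add]
        ring
      · have : N % 5 ≠ 3 := by
          have := sqN_mod m
          have := pentagonal_mod n
          omega
        rw [if_neg this, mul_zero, mul_eq_zero]
        by_cases h1 : sqN m % 5 = 1
        · exact Or.inr (if_neg fun h2 => hmn ⟨h1, h2⟩)
        · exact Or.inl (if_neg h1)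
    rw [tsum_congr term, tsum_mul_right, coef]
    split_ifs <;> simp
  refine ((inj.hasSum_iff ?_).mpr h2).of_eq (fun n => ?_) rfl
  · intro N hN
    refine if_neg fun h3 => hN ⟨N / 5, ?_⟩
    simp only
    omega
  · simp only [Function.comp]
    rw [if_pos (by omega), show (5 * n + 3) / 5 = n by omega]

/-- A sum over `ℤ` of terms supported on the union of two residue classes modulo `5`, the classes
being parametrised by `e₁` and `e₂`. -/
lemma hasSum_two_classes {f F₁ F₂ : ℤ → ℂ} {A B : ℂ} {r₁ r₂ : ℤ} (hr : r₁ ≠ r₂) (e₁ e₂ : ℤ → ℤ)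
    (hf : ∀ n, n % 5 ≠ r₁ → n % 5 ≠ r₂ → f n = 0)
    (i₁ : Function.Injective e₁) (i₂ : Function.Injective e₂)
    (m₁ : ∀ n, n % 5 = r₁ ↔ ∃ k, e₁ k = n) (m₂ : ∀ n, n % 5 = r₂ ↔ ∃ k, e₂ k = n)
    (h₁ : HasSum F₁ A) (h₂ : HasSum F₂ B)
    (hF₁ : ∀ k, f (e₁ k) = -F₁ k) (hF₂ : ∀ k, f (e₂ k) = -F₂ k) :
    HasSum f (-A + -B) := by
  have g₁ : HasSum (fun n => if n % 5 = r₁ then f n else 0) (-A) := by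
    refine (i₁.hasSum_iff fun n hn => if_neg fun h => hn ((m₁ n).mp h)).mp ?_
    refine h₁.neg.of_eq (fun k => ?_) rfl
    simp only [Function.comp]
    rw [if_pos ((m₁ _).mpr ⟨k, rfl⟩), hF₁]
  have g₂ : HasSum (fun n => if n % 5 = r₂ then f n else 0) (-B) := by
    refine (i₂.hasSum_iff fun n hn => if_neg fun h => hn ((m₂ n).mp h)).mp ?_
    refine h₂.neg.of_eq (fun k => ?_) rfl
    simp only [Function.comp]
    rw [if_pos ((m₂ _).mpr ⟨k, rfl⟩), hF₂]
  refine (g₁.add g₂).of_eq (fun n => ?_) rfl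
  by_cases c₁ : n % 5 = r₁
  · rw [if_pos c₁, if_neg (by omega), add_zero]
  · by_cases c₂ : n % 5 = r₂
    · rw [if_neg c₁, if_pos c₂, zero_add]
    · rw [if_neg c₁, if_neg c₂, add_zero, hf n c₁ c₂]

lemma neg_one_zpow_eq_neg {s t : ℤ} (r : ℤ) (h : s = t + (2 * r + 1)) :
    (-1 : ℂ) ^ s = -(-1) ^ t := by
  rw [neg_one_zpow_congr (t := t + 1) r (by omega), zpow_add_one₀ (by norm_num)]
  ring

lemma hasSum_thetaPart {q A : ℂ} {g : ℤ → ℕ} (hg : ∀ k, (g k : ℤ) = 5 * k ^ 2 + 2 * k)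
    (hA : HasSum (fun k : ℤ => (-1) ^ k * q ^ g k) A) : HasSum (thetaPart q) (-A + -A) := by
  refine hasSum_two_classes (r₁ := 1) (r₂ := 4) (by norm_num) (fun k => 5 * k + 1)
    (fun k => -(5 * k + 1)) (fun n h1 h4 => ?_) (fun a b h => by simp only at h; omega)
    (fun a b h => by simp only at h; omega)
    (fun n => ⟨fun h => ⟨n / 5, by omega⟩, fun ⟨k, hk⟩ => by omega⟩)
    (fun n => ⟨fun h => ⟨-(n / 5) - 1, by omega⟩, fun ⟨k, hk⟩ => by omega⟩) hA hA
    (fun k => ?_) (fun k => ?_)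
  · have := sqN_mod n
    exact if_neg (by omega)
  · have h1 : sqN (5 * k + 1) = 5 * g k + 1 := by
      zify
      rw [sqN_cast, hg]
      ring
    simp only [thetaPart]
    rw [if_pos (by omega), show sqN (5 * k + 1) / 5 = g k by omega,
      neg_one_zpow_eq_neg (t := k) (2 * k) (by ring)]
    ring
  · have h1 : sqN (-(5 * k + 1)) = 5 * g k + 1 := by
      zify
      rw [sqN_cast, hg]
      ring
    simp only [thetaPart]
    rw [if_pos (by omega), show sqN (-(5 * k + 1)) / 5 = g k by omega,
      neg_one_zpow_eq_neg (t := k) (-3 * k - 1) (by ring)]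
    ring

lemma hasSum_eulerPart {q A B : ℂ} {g g' : ℤ → ℕ} (hg : ∀ k, 2 * (g k : ℤ) = 15 * k ^ 2 - 7 * k)
    (hg' : ∀ k, 2 * (g' k : ℤ) = 15 * k ^ 2 + 17 * k + 4)
    (hA : HasSum (fun k : ℤ => (-1) ^ k * q ^ g k) A)
    (hB : HasSum (fun k : ℤ => (-1) ^ k * q ^ g' k) B) : HasSum (eulerPart q) (-A + -B) := by
  refine hasSum_two_classes (r₁ := 4) (r₂ := 3) (by norm_num) (fun k => 5 * k - 1)
    (fun k => 5 * k + 3) (fun n h1 h4 => ?_) (fun a b h => by simp only at h; omega)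
    (fun a b h => by simp only at h; omega)
    (fun n => ⟨fun h => ⟨n / 5 + 1, by omega⟩, fun ⟨k, hk⟩ => by omega⟩)
    (fun n => ⟨fun h => ⟨n / 5, by omega⟩, fun ⟨k, hk⟩ => by omega⟩) hA hB
    (fun k => ?_) (fun k => ?_)
  · have := pentagonal_mod n
    exact if_neg (by omega)
  · have h1 : pentagonal (5 * k - 1) = 5 * g k + 2 := by
      have h2 := two_mul_natCast_pentagonal (5 * k - 1)
      have h3 := hg k
      have : 2 * (pentagonal (5 * k - 1) : ℤ) = 2 * (5 * g k + 2) := by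
        linear_combination h2 - 5 * h3
      omega
    simp only [eulerPart]
    rw [if_pos (by omega), show pentagonal (5 * k - 1) / 5 = g k by omega,
      neg_one_zpow_eq_neg (t := k) (2 * k - 1) (by ring)]
    ring
  · have h1 : pentagonal (5 * k + 3) = 5 * g' k + 2 := by
      have h2 := two_mul_natCast_pentagonal (5 * k + 3)
      have h3 := hg' k
      have : 2 * (pentagonal (5 * k + 3) : ℤ) = 2 * (5 * g' k + 2) := by
        linear_combination h2 - 5 * h3
      omega
    simp only [eulerPart]
    rw [if_pos (by omega), show pentagonal (5 * k + 3) / 5 = g' k by omega,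
      neg_one_zpow_eq_neg (t := k) (2 * k + 1) (by ring)]
    ring

lemma hasSum_progression {q : ℂ} (hq : ‖q‖ < 1) :
    HasSum (fun n => coef (5 * n + 3) * q ^ n)
      (2 * Jb 5 q * Jba 5 1 q * Jba 10 3 q / Jba 5 2 q) := by
  have nonneg : ∀ f : ℤ → ℤ, (∀ k, 0 ≤ f k) → ∃ g : ℤ → ℕ, ∀ k, (g k : ℤ) = f k :=
    fun f hf => ⟨fun k => (f k).toNat, fun k => Int.toNat_of_nonneg (hf k)⟩
  -- An integer lies outside the open interval between the two roots of each quadratic form.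
  obtain ⟨g, hg⟩ := nonneg (fun k => 5 * k ^ 2 + 2 * k) fun k => by
    rcases le_or_gt 0 k with h | h <;> nlinarith
  obtain ⟨g₁, hg₁⟩ := nonneg (fun k => 15 * tri k + 4 * k) fun k => by
    have := two_mul_tri k
    rcases le_or_gt k 0 with h | h <;> nlinarith
  obtain ⟨g₂, hg₂⟩ := nonneg (fun k => 15 * tri k + 16 * k + 2) fun k => by
    have := two_mul_tri k
    rcases le_or_gt 0 k with h | h <;> nlinarith
  have hg' : ∀ k, (g k : ℤ) = (10 : ℕ) * tri k + (7 : ℕ) * k + (0 : ℕ) := fun k => by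
    rw [hg]; push_cast; linear_combination -5 * two_mul_tri k
  have hg₁' : ∀ k, (g₁ k : ℤ) = (15 : ℕ) * tri k + (4 : ℕ) * k + (0 : ℕ) := fun k => by
    rw [hg₁]; push_cast; ring
  have hg₂' : ∀ k, (g₂ k : ℤ) = (15 : ℕ) * tri k + (16 : ℕ) * k + (2 : ℕ) := fun k => by
    rw [hg₂]; push_cast; ring
  have q₁ : ∀ k, 2 * (g₁ k : ℤ) = 15 * k ^ 2 - 7 * k := fun k => by
    rw [hg₁]; linear_combination 15 * two_mul_tri k
  have q₂ : ∀ k, 2 * (g₂ k : ℤ) = 15 * k ^ 2 + 17 * k + 4 := fun k => by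
    rw [hg₂]; linear_combination 15 * two_mul_tri k
  rcases eq_or_ne q 0 with rfl | hq0
  · have z : ∀ k, g k = 0 ↔ k = 0 := fun k => by
      have := hg k
      constructor
      · intro h
        have h' : k * (5 * k + 2) = 0 := by rw [h] at this; push_cast at this; linarith
        rcases mul_eq_zero.mp h' with h | h <;> omega
      · rintro rfl; simpa using this
    have z₁ : ∀ k, g₁ k = 0 ↔ k = 0 := fun k => by
      have := q₁ k
      constructor
      · intro h
        have h' : k * (15 * k - 7) = 0 := by rw [h] at this; push_cast at this; linarith
        rcases mul_eq_zero.mp h' with h | h <;> omega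
      · rintro rfl; simpa using this
    have z₂ : ∀ k, g₂ k ≠ 0 := fun k h => by
      have := q₂ k
      have h' : (3 * k + 1) * (5 * k + 4) = 0 := by rw [h] at this; push_cast at this; linarith
      rcases mul_eq_zero.mp h' with h | h <;> omega
    have hV₂ : HasSum (fun k : ℤ => (-1 : ℂ) ^ k * 0 ^ g₂ k) 0 :=
      hasSum_zero.of_eq (fun k => by rw [zero_pow (z₂ k), mul_zero]) rfl
    refine (hasSum_coef_progression (hasSum_thetaPart hg (hasSum_theta_zero z))
      (hasSum_eulerPart q₁ q₂ (hasSum_theta_zero z₁) hV₂)).of_eq (fun _ => rfl) ?_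
    rw [Jba_zero (by norm_num) (by norm_num), Jba_zero (by norm_num) (by norm_num),
      Jba_zero (by norm_num) (by norm_num), Jb, qPochInf_zero_pow (by norm_num)]
    norm_num
  · have hA : HasSum (fun k : ℤ => (-1) ^ k * q ^ g k) (Jba 10 3 q) := by
      refine (hasSum_Jba hq hq0 (b := 10) (a := 7) (by norm_num) (by norm_num)).of_eq
        (fun n => ?_) ?_
      · rw [theta_term hg' hq0, pow_zero, one_mul]
      · simp only [Jba, show 10 - 3 = 7 from rfl, show 10 - 7 = 3 from rfl]
        ring
    have hV₁ : HasSum (fun k : ℤ => (-1) ^ k * q ^ g₁ k) (∑' k, jt (q ^ 15) (q ^ 4) k) :=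
      (summable_jt_pow hq hq0 (b := 15) (by norm_num) 4).of_norm.hasSum.of_eq
        (fun k => by rw [theta_term hg₁' hq0, pow_zero, one_mul]) rfl
    have hV₂ : HasSum (fun k : ℤ => (-1) ^ k * q ^ g₂ k)
        (q ^ 2 * ∑' k, jt (q ^ 15) (q ^ 16) k) :=
      ((summable_jt_pow hq hq0 (b := 15) (by norm_num) 16).of_norm.hasSum.mul_left _).of_eq
        (fun k => theta_term hg₂' hq0 k) rfl
    refine (hasSum_coef_progression (hasSum_thetaPart hg hA)
      (hasSum_eulerPart q₁ q₂ hV₁ hV₂)).of_eq (fun _ => rfl) ?_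
    have hne : Jba 5 2 q ≠ 0 := by
      have h5 := norm_pow_lt_one hq (b := 5) (by norm_num)
      exact mul_ne_zero (mul_ne_zero
        (qPochInf_ne_zero h5 (norm_pow_lt_one hq (by norm_num)))
        (qPochInf_ne_zero h5 (norm_pow_lt_one hq (by norm_num)))) (qPochInf_ne_zero h5 h5)
    rw [div_eq_iff hne]
    linear_combination 2 * Jba 10 3 q * quintuple hq hq0

theorem U53_theta4_euler (a : ℕ → ℂ)
    (ha : ∀ q : ℂ, ‖q‖ < 1 → theta4 q * qPochInf q q = ∑' n : ℕ, a n * q ^ n) :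
    ∀ q : ℂ, ‖q‖ < 1 →
      ∑' n : ℕ, a (5 * n + 3) * q ^ n = 2 * Jb 5 q * Jba 5 1 q * Jba 10 3 q / Jba 5 2 q := by
  intro q hq
  have h0 : theta4 0 * qPochInf 0 0 ≠ 0 := by
    rw [(hasSum_theta4 (by simp)).unique (hasSum_theta_zero fun n => by simp [sqN]),
      show qPochInf (0 : ℂ) 0 = 1 by simpa using qPochInf_zero_pow (b := 1) one_pos]
    norm_num
  rw [coeff_unique (f := fun x => theta4 x * qPochInf x x) ha (fun x hx => hasSum_coef hx) h0]
  exact (hasSum_progression hq).tsum_eq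
end

section
/- Let ζ = exp(2πi/5). Then U_{5,2}( (ζq;q)_∞ (ζ^{-1}q;q)_∞ (q;q)_∞ R(ζ;q) ) = − J_5², i.e. extracting the terms of (ζq;q)_∞ (ζ^{-1}q;q)_∞ (q;q)_∞ R(ζ;q) whose exponent is ≡ 2 (mod 5) and replacing q⁵ by q gives − (q⁵;q⁵)_∞². -/
/-- The Dyson rank of a partition: largest part minus number of parts. -/
noncomputable def partitionRank {n : ℕ} (p : n.Partition) : ℤ :=
  (p.parts.sup : ℤ) - p.parts.card

/-- The rank generating function `R(z;q) = Σ_{n≥0} Σ_m N(m,n) z^m q^n`. -/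
noncomputable def rankGF (z q : ℂ) : ℂ :=
  ∑' n : ℕ, (∑ p : n.Partition, z ^ partitionRank p) * q ^ n

/-- `ζ = exp(2πi/5)`. -/
noncomputable def zeta5 : ℂ := Complex.exp (2 * Real.pi * Complex.I / 5)

open Filter Topology

/-! ### Partitions as multisets and their generating function -/

/-- Multisets of positive integers, i.e. partitions of arbitrary size. -/
abbrev MP : Type := {s : Multiset ℕ // ∀ i ∈ s, 0 < i}

/-- The number partitioned by `s`. -/
def MP.wt (s : MP) : ℕ := s.1.sum

/-- Dyson's rank: the largest part minus the number of parts; the empty partition has rank `0`. -/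
noncomputable def MP.rk (s : MP) : ℤ := (s.1.sup : ℤ) - Multiset.card s.1

/-- Multisets of positive integers are Mathlib's partitions, fibred over their size. -/
def mpEquiv : MP ≃ Σ n : ℕ, n.Partition where
  toFun s := ⟨s.1.sum, ⟨s.1, fun h => s.2 _ h, rfl⟩⟩
  invFun p := ⟨p.2.parts, fun _ h => p.2.parts_pos h⟩
  left_inv _ := rfl
  right_inv := by
    rintro ⟨n, p, hp, hs⟩
    subst hs
    rfl

/-- Partitions with all parts at most `N`. -/
abbrev BP (N : ℕ) : Type := {s : Multiset ℕ // ∀ i ∈ s, 0 < i ∧ i ≤ N}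

/-- A partition with parts at most `N + 1` is a partition with parts at most `N` together with
the multiplicity of `N + 1`. -/
def bpEquiv (N : ℕ) : BP N × ℕ ≃ BP (N + 1) where
  toFun x := ⟨x.1.1 + Multiset.replicate x.2 (N + 1), by
    intro i hi
    rcases Multiset.mem_add.1 hi with h | h
    · have := x.1.2 i h
      omega
    · have := Multiset.eq_of_mem_replicate h
      omega⟩
  invFun s := (⟨s.1.filter (· ≠ N + 1), by
    intro i hi
    rw [Multiset.mem_filter] at hi
    have := s.2 i hi.1
    omega⟩, s.1.count (N + 1))
  left_inv := by
    rintro ⟨⟨s, hs⟩, j⟩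
    have h1 : s.filter (· ≠ N + 1) = s := Multiset.filter_eq_self.2 fun i hi => by
      have := hs i hi
      omega
    have h2 : s.count (N + 1) = 0 := Multiset.count_eq_zero.2 fun h => by
      have := hs _ h
      omega
    have h3 : (Multiset.replicate j (N + 1)).filter (· ≠ N + 1) = 0 :=
      Multiset.filter_eq_nil.2 fun i hi => by simp [Multiset.eq_of_mem_replicate hi]
    ext1
    · exact Subtype.ext (by simp only [Multiset.filter_add, h1, h3, add_zero])
    · simp only [Multiset.count_add, h2, Multiset.count_replicate_self, zero_add]
  right_inv := by
    rintro ⟨s, hs⟩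
    apply Subtype.ext
    simp only
    rw [← Multiset.filter_eq']
    have := Multiset.filter_add_not (fun a => a = N + 1) s
    rw [add_comm]
    exact this

/-- Euler's product for partitions with bounded parts, by induction on the bound: each new part
size contributes a geometric series. -/
theorem bp_sum {q : ℂ} (hq : ‖q‖ < 1) (N : ℕ) :
    Summable (fun s : BP N => ‖q ^ s.1.sum‖) ∧
      ∑' s : BP N, q ^ s.1.sum = ∏ i ∈ Finset.range N, (1 - q ^ (i + 1))⁻¹ := by
  induction N with
  | zero =>
    have : Unique (BP 0) :=
      { default := ⟨0, by simp⟩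
        uniq := fun ⟨s, hs⟩ => Subtype.ext (Multiset.eq_zero_of_forall_notMem fun i hi => by
          have := hs i hi
          omega) }
    refine ⟨(hasSum_unique _).summable, ?_⟩
    rw [tsum_eq_single (⟨0, by simp⟩ : BP 0)]
    · simp
    · intro b hb
      exact absurd (Subsingleton.elim _ _) hb
  | succ N ih =>
    have hlt : ‖q ^ (N + 1)‖ < 1 := by
      rw [norm_pow]
      exact pow_lt_one₀ (norm_nonneg _) hq (by omega)
    have hg : Summable (fun j : ℕ => ‖(q ^ (N + 1)) ^ j‖) := by
      simpa only [norm_pow] using summable_geometric_of_lt_one (norm_nonneg _) hlt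
    have key : ∀ x : BP N × ℕ, q ^ (bpEquiv N x).1.sum = q ^ x.1.1.sum * (q ^ (N + 1)) ^ x.2 := by
      rintro ⟨s, j⟩
      simp only [bpEquiv, Equiv.coe_fn_mk, Multiset.sum_add, Multiset.sum_replicate, pow_add q s.1.sum,
        smul_eq_mul, ← pow_mul, mul_comm j]
    constructor
    · rw [← (bpEquiv N).summable_iff]
      refine (ih.1.mul_norm hg).congr fun x => ?_
      simp only [Function.comp, key]
    · rw [← (bpEquiv N).tsum_eq, Finset.prod_range_succ, ← ih.2, ← tsum_geometric_of_norm_lt_one hlt,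
        tsum_mul_tsum_of_summable_norm ih.1 hg]
      exact tsum_congr key

theorem qPochInf_mul {x q : ℂ} (hq : ‖q‖ < 1) : Multipliable fun k : ℕ => (1 - x * q ^ k) := by
  simp only [sub_eq_add_neg]
  apply multipliable_one_add_of_summable
  simp only [norm_neg, norm_mul, norm_pow]
  exact (summable_geometric_of_lt_one (norm_nonneg _) hq).mul_left _

theorem qPochInf_tendsto {x q : ℂ} (hq : ‖q‖ < 1) :
    Tendsto (fun N => ∏ k ∈ Finset.range N, (1 - x * q ^ k)) atTop (𝓝 (qPochInf x q)) :=
  (qPochInf_mul hq).hasProd.tendsto_prod_nat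

theorem one_sub_pow_ne {q : ℂ} (hq : ‖q‖ < 1) (k : ℕ) : 1 - q ^ (k + 1) ≠ 0 := by
  intro h
  have h1 : ‖q ^ (k + 1)‖ = 1 := by rw [← sub_eq_zero.1 h]; simp
  rw [norm_pow] at h1
  have := pow_lt_one₀ (norm_nonneg _) hq (Nat.succ_ne_zero k)
  exact absurd h1 this.ne

theorem qPochInf_ne {q : ℂ} (hq : ‖q‖ < 1) : qPochInf q q ≠ 0 := by
  have := tprod_one_add_ne_zero_of_summable (f := fun k : ℕ => - (q * q ^ k)) ?_ ?_
  · simpa [qPochInf, sub_eq_add_neg] using this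
  · intro k
    have := one_sub_pow_ne hq k
    rwa [← sub_eq_add_neg, ← pow_succ']
  · simp only [norm_neg, norm_mul, norm_pow]
    exact (summable_geometric_of_lt_one (norm_nonneg _) hq).mul_left _

theorem inv_prod_tendsto {q : ℂ} (hq : ‖q‖ < 1) :
    Tendsto (fun N => ∏ i ∈ Finset.range N, (1 - q ^ (i + 1))⁻¹) atTop (𝓝 (qPochInf q q)⁻¹) := by
  simp only [Finset.prod_inv_distrib]
  refine Tendsto.inv₀ ?_ (qPochInf_ne hq)
  simpa only [pow_succ'] using qPochInf_tendsto (x := q) hq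

/-- Forgetting the bound on the parts. -/
def bpIncl (N : ℕ) (s : BP N) : MP := ⟨s.1, fun i hi => (s.2 i hi).1⟩

theorem bpIncl_inj (N : ℕ) : Function.Injective (bpIncl N) := fun _ _ h =>
  Subtype.ext (congrArg (fun u : MP => u.1) h)

theorem bpIncl_mem (N : ℕ) (s : MP) (h : ∀ i ∈ s.1, i ≤ N) : s ∈ Set.range (bpIncl N) :=
  ⟨⟨s.1, fun i hi => ⟨s.2 i hi, h i hi⟩⟩, rfl⟩

/-- Absolute convergence of the partition generating function: every finite partial sum at `‖q‖`
is bounded by a finite Euler product, and these converge. -/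
theorem mp_summable {q : ℂ} (hq : ‖q‖ < 1) : Summable fun s : MP => ‖q‖ ^ s.wt := by
  set x : ℂ := (‖q‖ : ℂ) with hx
  have hxn : ‖x‖ = ‖q‖ := by simp [hx]
  have hx1 : ‖x‖ < 1 := by rw [hxn]; exact hq
  obtain ⟨C, hC⟩ := (inv_prod_tendsto hx1).norm.bddAbove_range
  refine summable_of_sum_le (c := C) (fun _ => by positivity) fun u => ?_
  set N := u.sup MP.wt with hN
  have hle : ∀ s ∈ u, ∀ i ∈ s.1, i ≤ N := fun s hs i hi =>
    (Multiset.le_sum_of_mem hi).trans (Finset.le_sup (f := MP.wt) hs)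
  have h1 := bp_sum hx1 N
  simp only [norm_pow, hxn] at h1
  have h2 : ∑ s ∈ u, ‖q‖ ^ s.wt ≤ ∑' s : BP N, ‖q‖ ^ s.1.sum := by
    rw [← Finset.sum_preimage (bpIncl N) u (bpIncl_inj N).injOn (fun s : MP => ‖q‖ ^ s.wt)
      (fun s hs hn => absurd (bpIncl_mem N s (hle s hs)) hn)]
    exact h1.1.sum_le_tsum _ (fun _ _ => by positivity)
  refine h2.trans ?_
  have h3 : ((∑' s : BP N, ‖q‖ ^ s.1.sum : ℝ) : ℂ) = ∏ i ∈ Finset.range N, (1 - x ^ (i + 1))⁻¹ := by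
    rw [← h1.2]
    push_cast
    rfl
  calc _ ≤ ‖((∑' s : BP N, ‖q‖ ^ s.1.sum : ℝ) : ℂ)‖ := by
        rw [Complex.norm_real]; exact Real.le_norm_self _
    _ ≤ C := by rw [h3]; exact hC ⟨N, rfl⟩

theorem mp_summable' {q : ℂ} (hq : ‖q‖ < 1) : Summable fun s : MP => q ^ s.wt :=
  Summable.of_norm (by simpa using mp_summable hq)

/-- Euler: the generating function of all partitions is `1 / (q;q)_∞`. -/
theorem mp_tsum {q : ℂ} (hq : ‖q‖ < 1) : ∑' s : MP, q ^ s.wt = (qPochInf q q)⁻¹ := by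
  classical
  -- Both sides are the limit of the sums over partitions with parts at most `N`.
  refine tendsto_nhds_unique (f := fun N : ℕ =>
    ∑' s : MP, if ∀ i ∈ s.1, i ≤ N then q ^ s.wt else 0) (l := atTop) ?_ ?_
  · refine tendsto_tsum_of_dominated_convergence (mp_summable hq) (fun s => ?_)
      (.of_forall fun N s => ?_)
    · refine tendsto_const_nhds.congr' ?_
      filter_upwards [eventually_ge_atTop s.wt] with N hN
      rw [if_pos]
      exact fun i hi => (Multiset.le_sum_of_mem hi).trans hN
    · split_ifs <;> simp
  · refine (inv_prod_tendsto hq).congr fun N => ?_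
    rw [← (bp_sum hq N).2, ← (bpIncl_inj N).tsum_eq]
    · refine tsum_congr fun s => ?_
      have : ∀ i ∈ (bpIncl N s).1, i ≤ N := fun i hi => (s.2 i hi).2
      rw [if_pos this]
      rfl
    · intro s hs
      simp only [Function.mem_support, ne_eq, ite_eq_right_iff, Classical.not_imp] at hs
      exact bpIncl_mem N s hs.1

/-! ### Dyson's bijection and the generating functions of bounded rank -/

/-- Subtract one from every part and discard the zeros: the Ferrers diagram loses its first
column. -/
def decParts (s : Multiset ℕ) : Multiset ℕ := (s.map (· - 1)).filter (0 < ·)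

theorem decParts_pos (s : Multiset ℕ) : ∀ i ∈ decParts s, 0 < i := fun _ hi =>
  (Multiset.mem_filter.1 hi).2

theorem decParts_cons (a : ℕ) (s : Multiset ℕ) (ha : 0 < a) :
    (a = 1 ∧ decParts (a ::ₘ s) = decParts s) ∨
      (1 < a ∧ decParts (a ::ₘ s) = (a - 1) ::ₘ decParts s) := by
  rcases Nat.lt_or_ge 1 a with h | h
  · refine Or.inr ⟨h, ?_⟩
    rw [decParts, Multiset.map_cons, Multiset.filter_cons_of_pos _ (by omega)]
    rfl
  · refine Or.inl ⟨by omega, ?_⟩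
    rw [decParts, Multiset.map_cons, Multiset.filter_cons_of_neg _ (by omega)]
    rfl

theorem decParts_card (s : Multiset ℕ) : Multiset.card (decParts s) ≤ Multiset.card s :=
  (Multiset.card_le_card (Multiset.filter_le _ _)).trans (Multiset.card_map _ _).le

theorem decParts_le {s : Multiset ℕ} {N : ℕ} (h : ∀ i ∈ s, i ≤ N + 1) :
    ∀ i ∈ decParts s, i ≤ N := by
  intro i hi
  obtain ⟨j, hj, rfl⟩ := Multiset.mem_map.1 (Multiset.mem_filter.1 hi).1
  have := h j hj
  omega

theorem decParts_sum {s : Multiset ℕ} (h : ∀ i ∈ s, 0 < i) :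
    (decParts s).sum + Multiset.card s = s.sum := by
  induction s using Multiset.induction with
  | empty => simp [decParts]
  | cons a s ih =>
    have ih' := ih fun i hi => h i (Multiset.mem_cons_of_mem hi)
    rcases decParts_cons a s (h a (Multiset.mem_cons_self a s)) with ⟨h1, h2⟩ | ⟨h1, h2⟩ <;>
    · rw [h2]
      simp only [Multiset.sum_cons, Multiset.card_cons]
      omega

/-- Putting the first column back: `decParts` forgets only the number of parts equal to `1`. -/
theorem decParts_map (s : Multiset ℕ) (h : ∀ i ∈ s, 0 < i) :
    (decParts s).map (· + 1) +
      Multiset.replicate (Multiset.card s - Multiset.card (decParts s)) 1 = s := by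
  induction s using Multiset.induction with
  | empty => simp [decParts]
  | cons a s ih =>
    have ih' := ih fun i hi => h i (Multiset.mem_cons_of_mem hi)
    have hc := decParts_card s
    rcases decParts_cons a s (h a (Multiset.mem_cons_self a s)) with ⟨h1, h2⟩ | ⟨h1, h2⟩
    · rw [h2, Multiset.card_cons, Nat.succ_sub hc, Multiset.replicate_succ, Multiset.add_cons, ih',
        h1]
    · rw [h2, Multiset.card_cons, Multiset.card_cons, Nat.add_sub_add_right, Multiset.map_cons,
        Multiset.cons_add, ih', Nat.sub_add_cancel h1.le]

theorem decParts_add (s : Multiset ℕ) (h : ∀ i ∈ s, 0 < i) (c : ℕ) :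
    decParts (s.map (· + 1) + Multiset.replicate c 1) = s := by
  have h1 : s.filter (0 < ·) = s := Multiset.filter_eq_self.2 h
  have h2 : (Multiset.replicate c 0).filter (0 < ·) = 0 :=
    Multiset.filter_eq_nil.2 fun i hi => by simp [Multiset.eq_of_mem_replicate hi]
  simp [decParts, Multiset.map_add, Multiset.filter_add, h1, h2]

theorem sup_mem_of_ne (s : Multiset ℕ) (h : s ≠ 0) : s.sup ∈ s := by
  induction s using Multiset.induction with
  | empty => exact absurd rfl h
  | cons a s ih =>
    rw [Multiset.sup_cons]
    by_cases hs : s = 0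
    · simp [hs]
    · rcases le_total a s.sup with h1 | h1
      · rw [sup_eq_right.2 h1]
        exact Multiset.mem_cons_of_mem (ih hs)
      · rw [sup_eq_left.2 h1]
        exact Multiset.mem_cons_self a s

/-- Dyson's map: remove the first column of the Ferrers diagram, whose length is the number of
parts, and add that length plus `r` as a new part (or nothing, if it is zero). -/
def phi (r : ℤ) (s : Multiset ℕ) : Multiset ℕ :=
  if ((Multiset.card s : ℤ) + r).toNat = 0 then 0
  else ((Multiset.card s : ℤ) + r).toNat ::ₘ decParts s

/-- The inverse of `phi r`: remove the largest part `M` and add a first column of length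
`M - r`. -/
def psi (r : ℤ) (m : Multiset ℕ) : Multiset ℕ :=
  (m.erase m.sup).map (· + 1) +
    Multiset.replicate (((m.sup : ℤ) - r).toNat - Multiset.card (m.erase m.sup)) 1

/-- Rank at most `r + 1`, without the empty partition when `r = -1`; the domain of `phi r`. -/
def DomA (r : ℤ) (s : MP) : Prop := s.rk ≤ r + 1 ∧ ¬ (s.1 = 0 ∧ r = -1)

/-- Rank at least `r - 1`, without the empty partition when `r = 1`; the image of `phi r`. -/
def DomC (r : ℤ) (s : MP) : Prop := r - 1 ≤ s.rk ∧ ¬ (s.1 = 0 ∧ r = 1)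

/-- On `DomA r` the part added by `phi r` is nonnegative and at least as large as all the other
parts of the image. -/
theorem domA_facts {r : ℤ} {s : MP} (h : DomA r s) :
    0 ≤ (Multiset.card s.1 : ℤ) + r ∧
      ∀ i ∈ s.1, i ≤ ((Multiset.card s.1 : ℤ) + r).toNat + 1 := by
  obtain ⟨h1, h2⟩ := h
  unfold MP.rk at h1
  have h0 : 0 ≤ (Multiset.card s.1 : ℤ) + r := by
    by_cases hs : s.1 = 0
    · simp only [hs, Multiset.sup_zero, Multiset.card_zero, true_and] at h1 h2 ⊢
      simp at h1
      omega
    · have := s.2 _ (sup_mem_of_ne _ hs)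
      omega
  refine ⟨h0, fun i hi => ?_⟩
  have := Multiset.le_sup hi
  omega

theorem phi_spec {r : ℤ} {s : MP} (h : DomA r s) :
    (∀ i ∈ phi r s.1, 0 < i) ∧ ((phi r s.1).sup : ℤ) = Multiset.card s.1 + r ∧
      (phi r s.1).erase (phi r s.1).sup = decParts s.1 ∧
      ((phi r s.1).sum : ℤ) = s.1.sum + r := by
  obtain ⟨h0, h1⟩ := domA_facts h
  have hle := decParts_le h1
  have hsum := decParts_sum s.2
  unfold phi
  split_ifs with hM
  · have hd : decParts s.1 = 0 := Multiset.eq_zero_of_forall_notMem fun i hi => by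
      have := hle i hi
      have := decParts_pos _ i hi
      omega
    rw [hd] at hsum
    simp only [Multiset.sum_zero] at hsum
    refine ⟨by simp, ?_, by simp [hd], ?_⟩
    · simp; omega
    · rw [Multiset.sum_zero]; omega
  · have hsup : (((Multiset.card s.1 : ℤ) + r).toNat ::ₘ decParts s.1).sup =
        ((Multiset.card s.1 : ℤ) + r).toNat := by
      rw [Multiset.sup_cons]
      exact sup_eq_left.2 (Multiset.sup_le.2 hle)
    refine ⟨?_, ?_, ?_, ?_⟩
    · intro i hi
      rcases Multiset.mem_cons.1 hi with rfl | hi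
      · omega
      · exact decParts_pos _ i hi
    · rw [hsup]; omega
    · rw [hsup, Multiset.erase_cons_head]
    · rw [Multiset.sum_cons, Nat.cast_add]; omega

theorem domC_facts {r : ℤ} {m : MP} (h : DomC r m) :
    (Multiset.card (m.1.erase m.1.sup) : ℤ) ≤ (m.1.sup : ℤ) - r := by
  obtain ⟨h1, h2⟩ := h
  unfold MP.rk at h1
  by_cases hm : m.1 = 0
  · simp only [hm, Multiset.sup_zero, Multiset.card_zero, true_and] at h1 h2 ⊢
    simp at h1 ⊢
    omega
  · have := Multiset.card_erase_add_one (sup_mem_of_ne _ hm)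
    omega

theorem psi_spec {r : ℤ} {m : MP} (h : DomC r m) :
    (∀ i ∈ psi r m.1, 0 < i ∧ i ≤ m.1.sup + 1) ∧
      (Multiset.card (psi r m.1) : ℤ) = m.1.sup - r ∧
      decParts (psi r m.1) = m.1.erase m.1.sup := by
  have h0 := domC_facts h
  refine ⟨?_, ?_, ?_⟩
  · intro i hi
    rcases Multiset.mem_add.1 hi with hi | hi
    · obtain ⟨j, hj, rfl⟩ := Multiset.mem_map.1 hi
      have := Multiset.le_sup (Multiset.mem_of_mem_erase hj)
      omega
    · have := Multiset.eq_of_mem_replicate hi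
      omega
  · rw [psi, Multiset.card_add, Multiset.card_map, Multiset.card_replicate]
    omega
  · exact decParts_add _ (fun i hi => m.2 i (Multiset.mem_of_mem_erase hi)) _

/-- Dyson's bijection between partitions of rank at most `r + 1` and of rank at least `r - 1`;
it changes the size by `r`. -/
def dysonEquiv (r : ℤ) : {s : MP // DomA r s} ≃ {s : MP // DomC r s} where
  toFun s := ⟨⟨phi r s.1.1, (phi_spec s.2).1⟩, by
    obtain ⟨h1, h2, h3, h4⟩ := phi_spec s.2
    have hc := decParts_card s.1.1
    have hce := congrArg Multiset.card h3
    have h0 := (domA_facts s.2).1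
    constructor
    · simp only [MP.rk]
      by_cases hp : phi r s.1.1 = 0
      · rw [hp] at h2 ⊢
        simp at h2 ⊢
        omega
      · have := Multiset.card_erase_add_one (sup_mem_of_ne _ hp)
        omega
    · rintro ⟨hp, hr⟩
      simp only at hp
      rw [hp] at h2
      simp at h2
      omega⟩
  invFun m := ⟨⟨psi r m.1.1, fun i hi => ((psi_spec m.2).1 i hi).1⟩, by
    obtain ⟨h1, h2, h3⟩ := psi_spec m.2
    constructor
    · have : (psi r m.1.1).sup ≤ m.1.1.sup + 1 := Multiset.sup_le.2 fun i hi => (h1 i hi).2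
      simp only [MP.rk]
      omega
    · rintro ⟨hp, hr⟩
      simp only at hp
      rw [hp] at h2
      simp at h2
      omega⟩
  left_inv := by
    rintro ⟨s, hs⟩
    obtain ⟨h1, h2, h3, h4⟩ := phi_spec hs
    refine Subtype.ext (Subtype.ext ?_)
    simp only
    rw [psi, h3, h2, add_sub_cancel_right, Int.toNat_natCast]
    exact decParts_map s.1 s.2
  right_inv := by
    rintro ⟨m, hm⟩
    obtain ⟨h1, h2, h3⟩ := psi_spec hm
    refine Subtype.ext (Subtype.ext ?_)
    simp only
    rw [phi, h2, h3, sub_add_cancel, Int.toNat_natCast]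
    by_cases hp : m.1 = 0
    · simp [hp]
    · have := m.2 _ (sup_mem_of_ne _ hp)
      rw [if_neg (by omega), Multiset.cons_erase (sup_mem_of_ne _ hp)]

theorem dysonEquiv_wt (r : ℤ) (s : {s : MP // DomA r s}) :
    ((dysonEquiv r s).1.wt : ℤ) = s.1.wt + r := (phi_spec s.2).2.2.2

/-- Generating function of partitions of rank at most `m`. -/
noncomputable def rankLE (q : ℂ) (m : ℤ) : ℂ := ∑' s : MP, if s.rk ≤ m then q ^ s.wt else 0

/-- Generating function of all partitions. -/
noncomputable def partGF (q : ℂ) : ℂ := ∑' s : MP, q ^ s.wt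

theorem ite_summable {q : ℂ} (hq : ‖q‖ < 1) (p : MP → Prop) [DecidablePred p] :
    Summable fun s : MP => if p s then q ^ s.wt else 0 :=
  Summable.of_norm_bounded (mp_summable hq) fun s => by split_ifs <;> simp

theorem ite_zero_tsum (p : Prop) [Decidable p] :
    ∑' s : MP, (if s.1 = 0 ∧ p then (1 : ℂ) else 0) = if p then 1 else 0 := by
  rw [tsum_eq_single (⟨0, by simp⟩ : MP)]
  · simp
  · intro s hs
    rw [if_neg]
    rintro ⟨h, -⟩
    exact hs (Subtype.ext h)

theorem ite_zero_summable (p : Prop) [Decidable p] :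
    Summable fun s : MP => (if s.1 = 0 ∧ p then (1 : ℂ) else 0) := by
  refine summable_of_ne_finset_zero (s := {(⟨0, by simp⟩ : MP)}) fun s hs => ?_
  rw [if_neg]
  rintro ⟨h, -⟩
  exact hs (Finset.mem_singleton.2 (Subtype.ext h))

theorem wt_of_zero {s : MP} (h : s.1 = 0) : s.wt = 0 := by simp [MP.wt, h]
theorem rk_of_zero {s : MP} (h : s.1 = 0) : s.rk = 0 := by simp [MP.rk, h]

/-- The functional equation that Dyson's bijection gives for the generating functions of bounded
rank; the two indicator terms account for the empty partition. -/
theorem dyson_gf {q : ℂ} (hq : ‖q‖ < 1) (hq0 : q ≠ 0) (r : ℤ) :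
    q ^ r * (rankLE q (r + 1) - if r = -1 then 1 else 0) =
      partGF q - rankLE q (r - 2) - if r = 1 then 1 else 0 := by
  classical
  have hA : rankLE q (r + 1) - (if r = -1 then 1 else 0) =
      ∑' s : {s : MP // DomA r s}, q ^ s.1.wt := by
    rw [rankLE, ← ite_zero_tsum, ← (ite_summable hq _).tsum_sub (ite_zero_summable _)]
    have := tsum_subtype (f := fun s : MP => q ^ s.wt) {s | DomA r s}
    refine Eq.trans (tsum_congr fun s => ?_) this.symm
    simp only [Set.indicator, Set.mem_ofPred_eq, DomA]
    by_cases h : s.1 = 0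
    · simp only [wt_of_zero h, rk_of_zero h, h, pow_zero, true_and]
      split_ifs <;> first | omega | simp
    · simp [h]
  have hC : partGF q - rankLE q (r - 2) - (if r = 1 then 1 else 0) =
      ∑' s : {s : MP // DomC r s}, q ^ s.1.wt := by
    rw [rankLE, partGF, ← ite_zero_tsum, ← (mp_summable' hq).tsum_sub (ite_summable hq _),
      ← ((mp_summable' hq).sub (ite_summable hq _)).tsum_sub (ite_zero_summable _)]
    have := tsum_subtype (f := fun s : MP => q ^ s.wt) {s | DomC r s}
    refine Eq.trans (tsum_congr fun s => ?_) this.symm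
    simp only [Set.indicator, Set.mem_ofPred_eq, DomC]
    by_cases h : s.1 = 0
    · simp only [wt_of_zero h, rk_of_zero h, h, pow_zero, true_and]
      split_ifs <;> first | omega | simp
    · simp only [h, false_and, if_false, sub_zero, not_false_eq_true, and_true]
      split_ifs <;> first | omega | simp
  rw [hA, hC, ← (dysonEquiv r).tsum_eq, ← tsum_mul_left]
  refine tsum_congr fun s => ?_
  rw [← zpow_natCast, ← zpow_natCast, dysonEquiv_wt, zpow_add₀ hq0, mul_comm]

/-! ### The Jacobi triple product -/

/-- The coefficient of `z ^ i` in the theta function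
`(z;q)_∞ (q/z;q)_∞ (q;q)_∞`, for `q ≠ 0`; the division by two is exact. -/
noncomputable def thetaCoef (q : ℂ) (i : ℤ) : ℂ := (-1) ^ i * q ^ (i * (i - 1) / 2)

theorem thetaCoef_succ {q : ℂ} (hq0 : q ≠ 0) (i : ℤ) :
    thetaCoef q (i + 1) = -q ^ i * thetaCoef q i := by
  unfold thetaCoef
  have h : (i + 1) * (i + 1 - 1) / 2 = i + i * (i - 1) / 2 := by
    rw [show (i + 1) * (i + 1 - 1) = i * (i - 1) + i * 2 by ring,
      Int.add_mul_ediv_right _ _ (by norm_num), add_comm]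
  rw [h, zpow_add₀ hq0, zpow_add_one₀ (by norm_num)]
  ring

theorem thetaCoef_pred {q : ℂ} (hq0 : q ≠ 0) (i : ℤ) :
    thetaCoef q (i - 1) = -q ^ (1 - i) * thetaCoef q i := by
  have h := thetaCoef_succ hq0 (i - 1)
  rw [sub_add_cancel] at h
  rw [h, ← mul_assoc, neg_mul_neg, ← zpow_add₀ hq0]
  simp

theorem summable_pow_natAbs {x : ℝ} (h0 : 0 ≤ x) (h1 : x < 1) :
    Summable fun i : ℤ => x ^ i.natAbs :=
  Summable.of_nat_of_neg (by simpa using summable_geometric_of_lt_one h0 h1)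
    (by simpa using summable_geometric_of_lt_one h0 h1)

theorem thetaCoef_norm {q : ℂ} (hq : ‖q‖ < 1) (hq0 : q ≠ 0) (i : ℤ) :
    ‖thetaCoef q i‖ ≤ ‖q‖⁻¹ * ‖q‖ ^ i.natAbs := by
  have hp : 0 < ‖q‖ := norm_pos_iff.2 hq0
  have : ‖thetaCoef q i‖ = ‖q‖ ^ (i * (i - 1) / 2) := by simp [thetaCoef]
  rw [this, ← zpow_natCast, ← zpow_neg_one, ← zpow_add₀ hp.ne']
  refine zpow_le_zpow_right_of_le_one₀ hp hq.le ?_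
  rw [Int.le_ediv_iff_mul_le (by norm_num)]
  rcases abs_cases i with ⟨h, _⟩ | ⟨h, _⟩ <;> rw [Int.natCast_natAbs, h]
  · rcases Int.lt_or_le i 1 with h1 | h1
    · nlinarith
    · rcases Int.lt_or_le i 2 with h2 | h2 <;> nlinarith
  · nlinarith

theorem thetaCoef_summable {q : ℂ} (hq : ‖q‖ < 1) (hq0 : q ≠ 0) :
    Summable fun i => ‖thetaCoef q i‖ :=
  Summable.of_nonneg_of_le (fun _ => norm_nonneg _) (thetaCoef_norm hq hq0)
    ((summable_pow_natAbs (norm_nonneg q) hq).mul_left _)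

/-- The finite product `(q;q)_m`. -/
noncomputable def qFac (q : ℂ) (m : ℕ) : ℂ := ∏ i ∈ Finset.range m, (1 - q ^ (i + 1))

/-- The reciprocal `1 / (q;q)_m`, extended by zero to negative `m`, as is natural for
Gaussian binomial coefficients. -/
noncomputable def qFacInv (q : ℂ) (m : ℤ) : ℂ := if m < 0 then 0 else (qFac q m.toNat)⁻¹

theorem qFac_ne {q : ℂ} (hq : ‖q‖ < 1) (m : ℕ) : qFac q m ≠ 0 :=
  Finset.prod_ne_zero_iff.2 fun i _ => one_sub_pow_ne hq i

theorem qFac_succ (q : ℂ) (m : ℕ) : qFac q (m + 1) = qFac q m * (1 - q ^ (m + 1)) :=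
  Finset.prod_range_succ _ _

theorem qFacInv_pred {q : ℂ} (hq : ‖q‖ < 1) (m : ℤ) :
    qFacInv q (m - 1) = (1 - q ^ m) * qFacInv q m := by
  unfold qFacInv
  rcases lt_trichotomy m 0 with h | rfl | h
  · rw [if_pos h, if_pos (by omega), mul_zero]
  · simp
  · obtain ⟨n, rfl⟩ : ∃ n : ℕ, m = n + 1 := ⟨(m - 1).toNat, by omega⟩
    rw [if_neg (by omega), if_neg (by omega), add_sub_cancel_right, Int.toNat_natCast,
      show ((n : ℤ) + 1).toNat = n + 1 by omega, qFac_succ]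
    have h1 := qFac_ne hq n
    have h2 := one_sub_pow_ne hq n
    rw [show ((n : ℤ) + 1) = ((n + 1 : ℕ) : ℤ) by push_cast; rfl, zpow_natCast]
    field_simp

/-- The finite form of the Jacobi triple product, that is, the `q`-binomial theorem recentred at
its middle term. It is proved by induction on `N`. -/
theorem finite_jtp {q z : ℂ} (hq : ‖q‖ < 1) (hq0 : q ≠ 0) (hz : z ≠ 0) (N : ℕ) :
    HasSum (fun k : ℤ => thetaCoef q k * z ^ k *
        (qFac q (2 * N) * qFacInv q (N - k) * qFacInv q (N + k)))
      ((∏ i ∈ Finset.range N, (1 - z * q ^ i)) *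
        ∏ i ∈ Finset.range N, (1 - z⁻¹ * q * q ^ i)) := by
  induction N with
  | zero =>
    convert hasSum_single (0 : ℤ) ?_ using 1
    · simp [thetaCoef, qFac, qFacInv]
    · intro k hk
      rcases lt_or_gt_of_ne hk with h | h
      · simp [qFacInv, h]
      · simp [qFacInv, h]
  | succ N ih =>
    have h1 := ih.mul_left (1 + q ^ (2 * N + 1))
    have h2 := ((Equiv.subRight (1 : ℤ)).hasSum_iff.2 ih).mul_left (z * q ^ N)
    have h3 := ((Equiv.addRight (1 : ℤ)).hasSum_iff.2 ih).mul_left (z⁻¹ * q ^ (N + 1))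
    convert (h1.sub h2).sub h3 using 1
    · rfl
    · funext k
      simp only [Function.comp, Equiv.subRight_apply, Equiv.coe_addRight]
      -- Express every reciprocal through the two with the largest indices, `N + 1 ± k`.
      have e1 : qFacInv q (N - k) = (1 - q ^ ((N : ℤ) + 1 - k)) * qFacInv q (N + 1 - k) := by
        rw [← qFacInv_pred hq]; congr 1; ring
      have e2 : qFacInv q (N + k) = (1 - q ^ ((N : ℤ) + 1 + k)) * qFacInv q (N + 1 + k) := by
        rw [← qFacInv_pred hq]; congr 1; ring
      have e3 : qFacInv q (N - (k + 1)) = (1 - q ^ ((N : ℤ) - k)) * qFacInv q (N - k) := by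
        rw [← qFacInv_pred hq]; congr 1; ring
      have e4 : qFacInv q (N + (k - 1)) = (1 - q ^ ((N : ℤ) + k)) * qFacInv q (N + k) := by
        rw [← qFacInv_pred hq]; congr 1; ring
      have e5 : qFacInv q (N - (k - 1)) = qFacInv q (N + 1 - k) := by congr 1; ring
      have e6 : qFacInv q (N + (k + 1)) = qFacInv q (N + 1 + k) := by congr 1; ring
      rw [e3, e4, e5, e6, e1, e2, thetaCoef_succ hq0, thetaCoef_pred hq0, zpow_add_one₀ hz,
        zpow_sub_one₀ hz]
      have hf : qFac q (2 * (N + 1)) =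
          qFac q (2 * N) * (1 - q ^ (2 * N + 1)) * (1 - q ^ (2 * N + 2)) := by
        rw [show 2 * (N + 1) = 2 * N + 1 + 1 by ring, qFac_succ, qFac_succ]
      have hX : q ^ ((N : ℤ) + 1 - k) = q ^ N * q * (q ^ k)⁻¹ := by
        rw [zpow_sub₀ hq0, zpow_add_one₀ hq0, zpow_natCast, div_eq_mul_inv]
      have hY : q ^ ((N : ℤ) + 1 + k) = q ^ N * q * q ^ k := by
        rw [zpow_add₀ hq0, zpow_add_one₀ hq0, zpow_natCast]
      have hX' : q ^ ((N : ℤ) - k) = q ^ N * (q ^ k)⁻¹ := by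
        rw [zpow_sub₀ hq0, zpow_natCast, div_eq_mul_inv]
      have hY' : q ^ ((N : ℤ) + k) = q ^ N * q ^ k := by
        rw [zpow_add₀ hq0, zpow_natCast]
      have h1k : q ^ (1 - k) = q * (q ^ k)⁻¹ := by
        rw [zpow_sub₀ hq0, zpow_one, div_eq_mul_inv]
      push_cast
      rw [hf, hX, hY, hX', hY', h1k]
      have hk : q ^ k ≠ 0 := zpow_ne_zero _ hq0
      generalize q ^ k = w at *
      generalize z ^ k = y
      generalize qFacInv q ((N : ℤ) + 1 - k) = U
      generalize qFacInv q ((N : ℤ) + 1 + k) = V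
      field_simp
      ring
    · rw [Finset.prod_range_succ, Finset.prod_range_succ]
      field_simp
      ring

theorem qFac_tendsto {q : ℂ} (hq : ‖q‖ < 1) :
    Tendsto (qFac q) atTop (𝓝 (qPochInf q q)) := by
  have := qPochInf_tendsto (x := q) hq
  simp only [← pow_succ'] at this
  exact this

theorem qFacInv_tendsto {q : ℂ} (hq : ‖q‖ < 1) :
    Tendsto (qFacInv q) atTop (𝓝 (qPochInf q q)⁻¹) := by
  have h1 : Tendsto (fun m : ℤ => (qFac q m.toNat)⁻¹) atTop (𝓝 (qPochInf q q)⁻¹) :=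
    ((qFac_tendsto hq).inv₀ (qPochInf_ne hq)).comp
      (tendsto_atTop_mono (fun m => Int.toNat_le_toNat le_rfl)
        (tendsto_atTop.2 fun b => by
          filter_upwards [eventually_ge_atTop (b : ℤ)] with m hm
          omega))
  refine h1.congr' ?_
  filter_upwards [eventually_ge_atTop 0] with m hm
  rw [qFacInv, if_neg (by omega)]

theorem qFac_bound {q : ℂ} (hq : ‖q‖ < 1) : ∃ C : ℝ, ∀ m, ‖qFac q m‖ ≤ C := by
  obtain ⟨C, hC⟩ := (qFac_tendsto hq).norm.bddAbove_range
  exact ⟨C, fun m => hC ⟨m, rfl⟩⟩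

theorem qFacInv_bound {q : ℂ} (hq : ‖q‖ < 1) : ∃ C : ℝ, ∀ m, ‖qFacInv q m‖ ≤ C := by
  obtain ⟨C, hC⟩ := ((qFac_tendsto hq).inv₀ (qPochInf_ne hq)).norm.bddAbove_range
  refine ⟨C, fun m => ?_⟩
  unfold qFacInv
  split_ifs
  · rw [norm_zero]
    exact (norm_nonneg _).trans (hC ⟨0, rfl⟩)
  · exact hC ⟨m.toNat, rfl⟩

/-- The Jacobi triple product on the unit circle: the limit of `finite_jtp`, by dominated
convergence. -/
theorem jacobi_triple_s12 {q z : ℂ} (hq : ‖q‖ < 1) (hq0 : q ≠ 0) (hz : ‖z‖ = 1) :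
    qPochInf z q * qPochInf (z⁻¹ * q) q * qPochInf q q = ∑' k : ℤ, thetaCoef q k * z ^ k := by
  have hz0 : z ≠ 0 := by rintro rfl; simp at hz
  have hne := qPochInf_ne hq
  obtain ⟨C, hC⟩ := qFac_bound hq
  obtain ⟨D, hD⟩ := qFacInv_bound hq
  have hC0 : 0 ≤ C := (norm_nonneg _).trans (hC 0)
  have hD0 : 0 ≤ D := (norm_nonneg _).trans (hD 0)
  have h1 : Tendsto (fun N : ℕ => ∑' k : ℤ, thetaCoef q k * z ^ k *
        (qFac q (2 * N) * qFacInv q (N - k) * qFacInv q (N + k))) atTop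
      (𝓝 (∑' k : ℤ, thetaCoef q k * z ^ k *
        (qPochInf q q * (qPochInf q q)⁻¹ * (qPochInf q q)⁻¹))) := by
    refine tendsto_tsum_of_dominated_convergence
      ((thetaCoef_summable hq hq0).mul_right (C * D * D)) (fun k => ?_)
      (.of_forall fun N k => ?_)
    · refine Tendsto.const_mul _ (Tendsto.mul (Tendsto.mul ?_ ?_) ?_)
      · exact (qFac_tendsto hq).comp (tendsto_id.const_mul_atTop' (by norm_num))
      · exact (qFacInv_tendsto hq).comp
          (tendsto_atTop_add_const_right _ (-k) tendsto_natCast_atTop_atTop)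
      · exact (qFacInv_tendsto hq).comp
          (tendsto_atTop_add_const_right _ k tendsto_natCast_atTop_atTop)
    · rw [norm_mul, norm_mul, norm_zpow, hz, one_zpow, mul_one, norm_mul, norm_mul]
      gcongr
      · exact hC _
      · exact hD _
      · exact hD _
  have h2 := (qPochInf_tendsto (x := z) hq).mul (qPochInf_tendsto (x := z⁻¹ * q) hq)
  have h3 := tendsto_nhds_unique h2 (h1.congr fun N => (finite_jtp hq hq0 hz0 N).tsum_eq)
  rw [h3, tsum_mul_right]
  field_simp

/-! ### The coefficients of the theta product times the rank generating function -/

theorem rankLE_norm {q : ℂ} (hq : ‖q‖ < 1) (m : ℤ) :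
    ‖rankLE q m‖ ≤ ∑' s : MP, ‖q‖ ^ s.wt := by
  refine tsum_of_norm_bounded (mp_summable hq).hasSum fun s => ?_
  split_ifs <;> simp

theorem thetaCoef_refl (q : ℂ) (i : ℤ) : thetaCoef q (1 - i) = -thetaCoef q i := by
  unfold thetaCoef
  rw [show (1 - i) * (1 - i - 1) = i * (i - 1) by ring, zpow_sub₀ (by norm_num), zpow_one]
  rcases Int.even_or_odd i with h | h
  · simp [h.neg_one_zpow]
  · simp [h.neg_one_zpow]

/-- The theta function vanishes at `z = 1`, because its coefficients cancel in pairs under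
`i ↦ 1 - i`. -/
theorem thetaCoef_tsum (q : ℂ) : ∑' i, thetaCoef q i = 0 := by
  have h := (Equiv.subLeft (1 : ℤ)).tsum_eq (thetaCoef q)
  simp only [Equiv.subLeft_apply, thetaCoef_refl, tsum_neg] at h
  exact self_eq_neg.1 h.symm

/-- The coefficient of `z ^ k` in `θ(z) R(z) / (1 - z)`, as a convolution of the theta
coefficients with the generating functions of partitions of bounded rank. -/
noncomputable def convCoef (q : ℂ) (k : ℤ) : ℂ := ∑' i : ℤ, thetaCoef q i * rankLE q (k - i)

theorem convCoef_summable {q : ℂ} (hq : ‖q‖ < 1) (hq0 : q ≠ 0) (k : ℤ) :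
    Summable fun i : ℤ => thetaCoef q i * rankLE q (k - i) := by
  refine Summable.of_norm_bounded
    ((thetaCoef_summable hq hq0).mul_right (∑' s : MP, ‖q‖ ^ s.wt)) fun i => ?_
  rw [norm_mul]
  gcongr
  exact rankLE_norm hq _

theorem convCoef_bound {q : ℂ} (hq : ‖q‖ < 1) (hq0 : q ≠ 0) :
    ∃ M : ℝ, ∀ k, ‖convCoef q k‖ ≤ M := by
  refine ⟨_, fun k => tsum_of_norm_bounded
    ((thetaCoef_summable hq hq0).mul_right (∑' s : MP, ‖q‖ ^ s.wt)).hasSum fun i => ?_⟩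
  rw [norm_mul]
  gcongr
  exact rankLE_norm hq _

/-- The inhomogeneous term of the recurrence `convCoef_rec`. -/
noncomputable def recTerm (q : ℂ) (k : ℤ) : ℂ := q⁻¹ * thetaCoef q (k + 3) - thetaCoef q (k + 1)

/-- The convolution of `dyson_gf` with the theta coefficients. The generating function of all
partitions drops out because the theta coefficients sum to zero. -/
theorem convCoef_rec {q : ℂ} (hq : ‖q‖ < 1) (hq0 : q ≠ 0) (k : ℤ) :
    convCoef q k = q ^ (k + 1) * convCoef q (k + 2) + recTerm q k := by
  -- `dyson_gf` with `r = m - 1`, cleared of the negative power of `q`.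
  have hD : ∀ m : ℤ, q ^ m * rankLE q m = q * (partGF q - rankLE q (m - 3) -
      if m = 2 then 1 else 0) + if m = 0 then 1 else 0 := by
    intro m
    have h := dyson_gf hq hq0 (m - 1)
    rw [sub_add_cancel, show m - 1 - 2 = m - 3 by ring] at h
    rw [zpow_sub_one₀ hq0] at h
    by_cases h0 : m = 0
    · subst h0
      simp at h ⊢
      rw [← h]
      field_simp
      ring
    · have e1 : ¬ m - 1 = -1 := by omega
      have e2 : (m - 1 = 1) ↔ m = 2 := by omega
      simp only [e1, e2, h0, if_false, sub_zero, add_zero] at h ⊢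
      rw [← h]
      field_simp
  -- Multiply `hD` at `k + 2 - i` by `q ^ i * θ_i = -θ_(i+1)`.
  have hterm : ∀ i : ℤ, q ^ (k + 2) * (thetaCoef q i * rankLE q (k + 2 - i)) =
      -(q * partGF q) * thetaCoef q (i + 1) +
        q * (thetaCoef q (i + 1) * rankLE q (k - (i + 1))) +
        (if i = k then q * thetaCoef q (k + 1) else 0) -
        (if i = k + 2 then thetaCoef q (k + 3) else 0) := by
    intro i
    have h1 : q ^ (k + 2) = q ^ i * q ^ (k + 2 - i) := by
      rw [← zpow_add₀ hq0]; congr 1; ring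
    rw [h1, show q ^ i * q ^ (k + 2 - i) * (thetaCoef q i * rankLE q (k + 2 - i)) =
      -(-q ^ i * thetaCoef q i) * (q ^ (k + 2 - i) * rankLE q (k + 2 - i)) by ring,
      ← thetaCoef_succ hq0, hD, show k + 2 - i - 3 = k - (i + 1) by ring]
    by_cases c1 : i = k
    · subst c1
      rw [if_pos (by ring), if_neg (by omega), if_pos rfl, if_neg (by omega)]
      ring
    · rw [if_neg (show ¬ k + 2 - i = 2 by omega), if_neg c1]
      by_cases c2 : i = k + 2
      · subst c2
        rw [if_pos (by ring), if_pos rfl, show k + 2 + 1 = k + 3 by ring]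
        ring
      · rw [if_neg (show ¬ k + 2 - i = 0 by omega), if_neg c2]
        ring
  have hs1 := (Equiv.addRight (1 : ℤ)).hasSum_iff.2 (thetaCoef_summable hq hq0).of_norm.hasSum
  rw [thetaCoef_tsum] at hs1
  have hs2 := (Equiv.addRight (1 : ℤ)).hasSum_iff.2 (convCoef_summable hq hq0 k).hasSum
  have hs := (((hs1.mul_left (-(q * partGF q))).add (hs2.mul_left q)).add
    (hasSum_ite_eq k (q * thetaCoef q (k + 1)))).sub (hasSum_ite_eq (k + 2) (thetaCoef q (k + 3)))
  have hL := ((convCoef_summable hq hq0 (k + 2)).hasSum.mul_left (q ^ (k + 2)))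
  simp only [hterm] at hL
  have h := hL.unique hs
  change q ^ (k + 2) * convCoef q (k + 2) = _ * 0 + q * convCoef q k + _ - _ at h
  rw [show k + 2 = k + 1 + 1 by ring, zpow_add_one₀ hq0] at h
  have h2 : q * convCoef q k = q * (q ^ (k + 1) * convCoef q (k + 2) + recTerm q k) := by
    rw [recTerm, mul_add, mul_sub, ← mul_assoc q q⁻¹, mul_inv_cancel₀ hq0]
    rw [show k + 2 = k + 1 + 1 by ring]
    linear_combination -h
  exact mul_left_cancel₀ hq0 h2

/-- The homogeneous recurrence has no nonzero bounded solution: each iteration bounds it by a further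
factor of `‖q‖`. -/
theorem rec_unique {q : ℂ} (hq : ‖q‖ < 1) {d : ℕ → ℂ} {M : ℝ} (hM : ∀ k, ‖d k‖ ≤ M)
    (hd : ∀ k, d k = q ^ (k + 1) * d (k + 2)) (k : ℕ) : d k = 0 := by
  have key : ∀ j k : ℕ, ‖d k‖ ≤ ‖q‖ ^ j * M := by
    intro j
    induction j with
    | zero => simpa using hM
    | succ j ih =>
      intro k
      rw [hd k, norm_mul, norm_pow, pow_succ, pow_succ, mul_assoc, mul_left_comm, mul_assoc,
        mul_left_comm]
      have h0 : 0 ≤ ‖q‖ ^ j * M := (norm_nonneg _).trans (ih 0)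
      calc ‖q‖ ^ k * (‖q‖ * ‖d (k + 2)‖) ≤ 1 * (‖q‖ * (‖q‖ ^ j * M)) := by
            gcongr
            · exact pow_le_one₀ (norm_nonneg _) hq.le
            · exact ih _
        _ = ‖q‖ ^ j * (‖q‖ * M) := by ring
  have hlim : Tendsto (fun j : ℕ => ‖q‖ ^ j * M) atTop (𝓝 0) := by
    simpa using (tendsto_pow_atTop_nhds_zero_of_lt_one (norm_nonneg q) hq).mul_const M
  exact norm_le_zero_iff.1 (ge_of_tendsto' hlim fun j => key j k)

/-- The symmetry `k ↦ -k`: the recurrence read at `-k - 2` is the recurrence read at `k`. -/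
theorem convCoef_neg {q : ℂ} (hq : ‖q‖ < 1) (hq0 : q ≠ 0) (k : ℕ) :
    convCoef q (-k) = convCoef q k := by
  obtain ⟨M, hM⟩ := convCoef_bound hq hq0
  refine sub_eq_zero.1 (rec_unique hq (d := fun k : ℕ => convCoef q (-k) - convCoef q k)
    (M := M + M) (fun k => (norm_sub_le _ _).trans (add_le_add (hM _) (hM _))) (fun k => ?_) k)
  have h1 := convCoef_rec hq hq0 k
  have h2 := convCoef_rec hq hq0 (-k - 2)
  have h3 : recTerm q k = - q ^ ((k : ℤ) + 1) * recTerm q (-k - 2) := by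
    unfold recTerm
    rw [show (-(k : ℤ) - 2 + 3) = 1 - k by ring, show (-(k : ℤ) - 2 + 1) = 1 - (k + 2) by ring,
      thetaCoef_refl, thetaCoef_refl, show (k : ℤ) + 3 = k + 2 + 1 by ring,
      thetaCoef_succ hq0 (k + 2), thetaCoef_succ hq0 k, zpow_add₀ hq0, zpow_add₀ hq0, zpow_one]
    norm_cast
    field_simp
    ring
  have h4 : q ^ ((k : ℤ) + 1) * q ^ (-(k : ℤ) - 2 + 1) = 1 := by
    rw [← zpow_add₀ hq0, show (k : ℤ) + 1 + (-(k : ℤ) - 2 + 1) = 0 by ring, zpow_zero]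
  rw [sub_add_cancel] at h2
  have e : -((k : ℤ) + 2) = -k - 2 := by ring
  have e2 : q ^ ((k : ℤ) + 1) = q ^ (k + 1) := by norm_cast
  rw [h1, h3]
  simp only [Nat.cast_add, Nat.cast_ofNat]
  rw [e, h2]
  rw [e2] at h4 ⊢
  linear_combination (-convCoef q (-k)) * h4

/-- The sign in the Hecke-type double sum: `1` for `J ≥ 0` and `-1` for `J < 0`. -/
def heckeSgn : ℤ → ℤ
  | Int.ofNat _ => 1
  | Int.negSucc _ => -1

/-- The exponent in the Hecke-type double sum. With `K = |k|` it is
`K (K + 1) / 2 + J (3 J + 1) + K L`, where `L = 3 J` for `J ≥ 0` and `L = -(3 J + 1)`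
for `J < 0`. -/
def heckeExp (k : ℤ) : ℤ → ℕ
  | Int.ofNat j => k.natAbs * (k.natAbs + 1) / 2 + k.natAbs * (3 * j) + j * (3 * j + 1)
  | Int.negSucc j =>
    k.natAbs * (k.natAbs + 1) / 2 + k.natAbs * (3 * j + 2) + (j + 1) * (3 * j + 2)

theorem heckeExp_nat (k : ℤ) (j : ℕ) : heckeExp k (j : ℤ) =
    k.natAbs * (k.natAbs + 1) / 2 + k.natAbs * (3 * j) + j * (3 * j + 1) := rfl

theorem le_heckeExp (k J : ℤ) : k.natAbs + J.natAbs ≤ heckeExp k J := by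
  have h : k.natAbs ≤ k.natAbs * (k.natAbs + 1) / 2 := by
    rw [Nat.le_div_iff_mul_le (by norm_num)]
    rcases Nat.eq_zero_or_pos k.natAbs with h | h
    · simp [h]
    · exact Nat.mul_le_mul_left _ (by omega)
  cases J with
  | ofNat j =>
    simp only [heckeExp, Int.ofNat_eq_natCast, Int.natAbs_natCast]
    nlinarith [Nat.zero_le (k.natAbs * (3 * j)), Nat.le_mul_self j]
  | negSucc j =>
    simp only [heckeExp, Int.natAbs_negSucc]
    nlinarith [Nat.zero_le (k.natAbs * (3 * j + 2))]

theorem heckeSgn_norm (J : ℤ) : ‖(heckeSgn J : ℂ)‖ = 1 := by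
  cases J <;> simp [heckeSgn]

theorem heckeTerm_norm {q : ℂ} (hq : ‖q‖ < 1) (k J : ℤ) :
    ‖(heckeSgn J : ℂ) * q ^ heckeExp k J‖ ≤ ‖q‖ ^ k.natAbs * ‖q‖ ^ J.natAbs := by
  rw [norm_mul, heckeSgn_norm, one_mul, norm_pow, ← pow_add]
  exact pow_le_pow_of_le_one (norm_nonneg _) hq.le (le_heckeExp k J)

/-- The inner sum of the Hecke-type double sum, the coefficient of `z ^ k`. -/
noncomputable def heckeCoef (q : ℂ) (k : ℤ) : ℂ :=
  (-1) ^ k * ∑' J : ℤ, (heckeSgn J : ℂ) * q ^ heckeExp k J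

/-- The Hecke coefficients satisfy the recurrence of `convCoef`: shifting `k` by two shifts the
index in each half of the inner sum by one, and the two first terms give `recTerm`. -/
theorem heckeCoef_rec {q : ℂ} (hq : ‖q‖ < 1) (hq0 : q ≠ 0) (k : ℕ) :
    heckeCoef q k = q ^ (k + 1) * heckeCoef q (k + 2 : ℕ) + recTerm q k := by
  have hs : ∀ k : ℕ, (Summable fun j : ℕ => q ^ heckeExp k (j : ℤ)) ∧
      Summable fun j : ℕ => q ^ heckeExp k (Int.negSucc j) := by
    intro k
    have hgeo := summable_geometric_of_lt_one (norm_nonneg q) hq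
    constructor
    · refine Summable.of_norm_bounded hgeo fun j => ?_
      rw [norm_pow]
      refine pow_le_pow_of_le_one (norm_nonneg _) hq.le ?_
      have := le_heckeExp k j
      simp at this
      omega
    · refine Summable.of_norm_bounded hgeo fun j => ?_
      rw [norm_pow]
      refine pow_le_pow_of_le_one (norm_nonneg _) hq.le ?_
      have := le_heckeExp k (Int.negSucc j)
      rw [Int.natAbs_negSucc] at this
      omega
  have hsplit : ∀ k : ℕ, ∑' J : ℤ, (heckeSgn J : ℂ) * q ^ heckeExp k J =
      ∑' j : ℕ, q ^ heckeExp k (j : ℤ) - ∑' j : ℕ, q ^ heckeExp k (Int.negSucc j) := by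
    intro k
    rw [sub_eq_add_neg, ← tsum_neg]
    refine HasSum.tsum_eq (HasSum.of_nat_of_neg_add_one ?_ ?_)
    · simpa [heckeSgn] using (hs k).1.hasSum
    · have := (hs k).2.neg.hasSum
      simp only [← Int.negSucc_eq, heckeSgn, Int.cast_neg, Int.cast_one, neg_one_mul]
      exact this
  have tri : (k + 2) * (k + 2 + 1) / 2 = k * (k + 1) / 2 + (2 * k + 3) := by
    rw [show (k + 2) * (k + 2 + 1) = k * (k + 1) + (2 * k + 3) * 2 by ring,
      Nat.add_mul_div_right _ _ (by norm_num)]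
  have hA : ∑' j : ℕ, q ^ heckeExp k (j : ℤ) =
      q ^ (k * (k + 1) / 2) + q ^ (k + 1) * ∑' j : ℕ, q ^ heckeExp (k + 2 : ℕ) (j : ℤ) := by
    rw [(hs k).1.tsum_eq_zero_add, ← tsum_mul_left]
    refine congrArg₂ (· + ·) ?_ ?_
    · simpa using congrArg (q ^ ·) (heckeExp_nat k 0)
    · refine tsum_congr fun j => ?_
      rw [heckeExp_nat, heckeExp_nat, ← pow_add]
      congr 1
      simp only [Int.natAbs_natCast]
      rw [tri]
      ring
  have hB : ∑' j : ℕ, q ^ heckeExp k (Int.negSucc j) =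
      q ^ (k * (k + 1) / 2 + 2 * k + 2) +
        q ^ (k + 1) * ∑' j : ℕ, q ^ heckeExp (k + 2 : ℕ) (Int.negSucc j) := by
    rw [(hs k).2.tsum_eq_zero_add, ← tsum_mul_left]
    congr 1
    · rw [heckeExp]; congr 1; simp; ring
    · refine tsum_congr fun j => ?_
      rw [heckeExp, heckeExp, ← pow_add]
      congr 1
      simp only [Int.natAbs_natCast]
      rw [tri]
      ring
  have hD : recTerm q k = (-1) ^ k * (q ^ (k * (k + 1) / 2) - q ^ (k * (k + 1) / 2 + 2 * k + 2)) := by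
    have h1 : thetaCoef q ((k : ℤ) + 1) = -((-1) ^ k * q ^ (k * (k + 1) / 2)) := by
      rw [thetaCoef, show ((k : ℤ) + 1) * (k + 1 - 1) / 2 = ((k * (k + 1) / 2 : ℕ) : ℤ) by
        push_cast; congr 1; ring, zpow_natCast, zpow_add_one₀ (by norm_num), zpow_natCast]
      ring
    unfold recTerm
    rw [show (k : ℤ) + 3 = k + 1 + 1 + 1 by ring, thetaCoef_succ hq0, thetaCoef_succ hq0, h1]
    have e1 : q ^ ((k : ℤ) + 1 + 1) = q ^ (k + 2) := by norm_cast
    have e2 : q ^ ((k : ℤ) + 1) = q ^ (k + 1) := by norm_cast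
    rw [e1, e2]
    field_simp
    ring
  unfold heckeCoef
  rw [hsplit, hsplit, hA, hB, hD, zpow_natCast, zpow_natCast, pow_add (-1 : ℂ) k 2]
  ring

/-- Both sides are bounded solutions of the same recurrence for `k ≥ 0`, and both are even in
`k`. -/
theorem convCoef_eq {q : ℂ} (hq : ‖q‖ < 1) (hq0 : q ≠ 0) (k : ℤ) :
    convCoef q k = heckeCoef q k := by
  have hnat : ∀ k : ℕ, convCoef q k = heckeCoef q k := by
    intro k
    obtain ⟨M, hM⟩ := convCoef_bound hq hq0
    have hH : ∀ k : ℕ, ‖heckeCoef q k‖ ≤ ∑' J : ℤ, ‖q‖ ^ J.natAbs := by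
      intro k
      rw [heckeCoef, norm_mul, norm_zpow, norm_neg, norm_one, one_zpow, one_mul]
      refine tsum_of_norm_bounded (summable_pow_natAbs (norm_nonneg q) hq).hasSum fun J => ?_
      exact (heckeTerm_norm hq k J).trans
        (mul_le_of_le_one_left (by positivity) (pow_le_one₀ (norm_nonneg _) hq.le))
    refine sub_eq_zero.1 (rec_unique hq (d := fun k : ℕ => convCoef q k - heckeCoef q k)
      (fun k => (norm_sub_le _ _).trans (add_le_add (hM _) (hH _))) (fun k => ?_) k)
    rw [convCoef_rec hq hq0, heckeCoef_rec hq hq0]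
    have e2 : q ^ ((k : ℤ) + 1) = q ^ (k + 1) := by norm_cast
    rw [e2]
    push_cast
    ring
  rcases Int.eq_nat_or_neg k with ⟨n, rfl | rfl⟩
  · exact hnat n
  · rw [convCoef_neg hq hq0, hnat]
    have : ∀ J, heckeExp (-n) J = heckeExp n J := by
      intro J
      cases J <;> simp [heckeExp]
    simp only [heckeCoef, this]
    rw [zpow_neg, ← inv_zpow, inv_neg, inv_one]

/-! ### The Hecke-type double sum -/

/-- Splitting off the first factor of the infinite product. -/
theorem qPochInf_succ {z q : ℂ} (hq : ‖q‖ < 1) :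
    qPochInf z q = (1 - z) * qPochInf (z * q) q := by
  have h : ∀ k : ℕ, 1 - z * q ^ (k + 1) = 1 - z * q * q ^ k := fun k => by ring
  have := tprod_eq_zero_mul' (f := fun k : ℕ => 1 - z * q ^ k)
    (by simpa only [h] using qPochInf_mul (x := z * q) hq)
  simp only [h, pow_zero, mul_one] at this
  exact this

theorem rankTerm_summable {z q : ℂ} (hq : ‖q‖ < 1) (hz : ‖z‖ = 1) :
    Summable fun s : MP => ‖z ^ s.rk * q ^ s.wt‖ := by
  simpa [hz] using mp_summable hq

theorem rankGF_eq {z q : ℂ} (hq : ‖q‖ < 1) (hz : ‖z‖ = 1) :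
    rankGF z q = ∑' s : MP, z ^ s.rk * q ^ s.wt := by
  have hs := (mpEquiv.symm.summable_iff).2 (rankTerm_summable hq hz).of_norm
  have h := hs.tsum_sigma
  rw [← mpEquiv.symm.tsum_eq]
  refine Eq.trans ?_ h.symm
  refine tsum_congr fun n => ?_
  rw [tsum_fintype, Finset.sum_mul]
  refine Finset.sum_congr rfl fun p _ => ?_
  obtain ⟨p, hp, hsum⟩ := p
  subst hsum
  rfl

/-- Shear `(k, s) ↦ (k - rank s, s)`. -/
noncomputable def shear : ℤ × MP ≃ ℤ × MP where
  toFun x := (x.1 - x.2.rk, x.2)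
  invFun x := (x.1 + x.2.rk, x.2)
  left_inv x := by simp
  right_inv x := by simp

theorem theta_rank_summable {z q : ℂ} (hq : ‖q‖ < 1) (hq0 : q ≠ 0) (hz : ‖z‖ = 1) :
    Summable fun x : ℤ × MP => thetaCoef q (x.1 - x.2.rk) * z ^ x.1 * q ^ x.2.wt := by
  have hz0 : z ≠ 0 := by rintro rfl; simp at hz
  have h1 : Summable fun i : ℤ => ‖thetaCoef q i * z ^ i‖ := by
    simpa [hz] using thetaCoef_summable hq hq0
  have := (shear.summable_iff).2 (summable_mul_of_summable_norm h1 (rankTerm_summable hq hz))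
  refine this.congr fun x => ?_
  simp only [Function.comp, shear, Equiv.coe_fn_mk]
  rw [zpow_sub₀ hz0]
  have := zpow_ne_zero x.2.rk hz0
  field_simp

/-- The product of the theta function and the rank generating function, collected by powers of
`z`. -/
theorem theta_mul_rank {z q : ℂ} (hq : ‖q‖ < 1) (hq0 : q ≠ 0) (hz : ‖z‖ = 1) :
    (∑' i, thetaCoef q i * z ^ i) * rankGF z q =
      ∑' k : ℤ, z ^ k * ∑' s : MP, thetaCoef q (k - s.rk) * q ^ s.wt := by
  have hz0 : z ≠ 0 := by rintro rfl; simp at hz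
  have h1 : Summable fun i : ℤ => ‖thetaCoef q i * z ^ i‖ := by
    simpa [hz] using thetaCoef_summable hq hq0
  rw [rankGF_eq hq hz, tsum_mul_tsum_of_summable_norm h1 (rankTerm_summable hq hz),
    ← shear.tsum_eq]
  have hterm : ∀ x : ℤ × MP, thetaCoef q (shear x).1 * z ^ (shear x).1 *
      (z ^ (shear x).2.rk * q ^ (shear x).2.wt) =
      thetaCoef q (x.1 - x.2.rk) * z ^ x.1 * q ^ x.2.wt := by
    intro x
    simp only [shear, Equiv.coe_fn_mk]
    rw [zpow_sub₀ hz0]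
    have := zpow_ne_zero x.2.rk hz0
    field_simp
  simp only [hterm]
  rw [(theta_rank_summable hq hq0 hz).tsum_prod]
  refine tsum_congr fun k => ?_
  rw [← tsum_mul_left]
  refine tsum_congr fun s => ?_
  ring

/-- The coefficients of `θ(z) R(z)` are the differences of those of `θ(z) R(z) / (1 - z)`. -/
theorem convCoef_sub {q : ℂ} (hq : ‖q‖ < 1) (hq0 : q ≠ 0) (k : ℤ) :
    ∑' s : MP, thetaCoef q (k - s.rk) * q ^ s.wt = convCoef q k - convCoef q (k - 1) := by
  have hs : Summable (Function.uncurry fun (i : ℤ) (s : MP) =>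
      thetaCoef q i * if s.rk = k - i then q ^ s.wt else 0) := by
    refine Summable.of_norm_bounded (summable_mul_of_summable_norm
      (f := fun i => (‖thetaCoef q i‖ : ℝ)) (g := fun s : MP => ‖q‖ ^ s.wt)
      (by simpa using thetaCoef_summable hq hq0) (by simpa using mp_summable hq)) fun x => ?_
    simp only [Function.uncurry, norm_mul]
    gcongr
    split_ifs <;> simp
  rw [convCoef, convCoef, ← (convCoef_summable hq hq0 k).tsum_sub (convCoef_summable hq hq0 _)]
  have hL : ∀ s : MP, thetaCoef q (k - s.rk) * q ^ s.wt =
      ∑' i : ℤ, thetaCoef q i * if s.rk = k - i then q ^ s.wt else 0 := by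
    intro s
    rw [tsum_eq_single (k - s.rk)]
    · rw [if_pos (by ring)]
    · intro i hi
      rw [if_neg (by omega), mul_zero]
  simp only [hL]
  rw [hs.tsum_comm]
  refine tsum_congr fun i => ?_
  rw [tsum_mul_left, ← mul_sub]
  congr 1
  rw [rankLE, rankLE, ← (ite_summable hq _).tsum_sub (ite_summable hq _)]
  refine tsum_congr fun s => ?_
  split_ifs <;> first | omega | simp

/-- The theta product times the rank generating function. -/
noncomputable def thetaRank (z q : ℂ) : ℂ :=
  qPochInf (z * q) q * qPochInf (z⁻¹ * q) q * qPochInf q q * rankGF z q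

theorem heckeCoef_norm {q : ℂ} (hq : ‖q‖ < 1) (k : ℤ) :
    ‖heckeCoef q k‖ ≤ ‖q‖ ^ k.natAbs * ∑' J : ℤ, ‖q‖ ^ J.natAbs := by
  rw [heckeCoef, norm_mul, norm_zpow, norm_neg, norm_one, one_zpow, one_mul, ← tsum_mul_left]
  exact tsum_of_norm_bounded ((summable_pow_natAbs (norm_nonneg q) hq).mul_left _).hasSum
    (heckeTerm_norm hq k)

/-- Multiply by `1 - z`, compare the coefficients through `convCoef_sub` and `convCoef_eq`, and
cancel `1 - z`. -/
theorem thetaRank_eq_conv {z q : ℂ} (hq : ‖q‖ < 1) (hq0 : q ≠ 0) (hz : ‖z‖ = 1) (hz1 : z ≠ 1) :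
    thetaRank z q = ∑' k : ℤ, heckeCoef q k * z ^ k := by
  have hz0 : z ≠ 0 := by rintro rfl; simp at hz
  have hsum : Summable fun k : ℤ => heckeCoef q k * z ^ k := by
    refine Summable.of_norm_bounded ((summable_pow_natAbs (norm_nonneg q) hq).mul_right
      (∑' J : ℤ, ‖q‖ ^ J.natAbs)) fun k => ?_
    rw [norm_mul, norm_zpow, hz, one_zpow, mul_one]
    exact heckeCoef_norm hq k
  have h1 : (1 - z) * thetaRank z q = (∑' i, thetaCoef q i * z ^ i) * rankGF z q := by
    rw [← jacobi_triple_s12 hq hq0 hz, qPochInf_succ hq, thetaRank]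
    ring
  have hshift : HasSum (fun k : ℤ => heckeCoef q (k - 1) * z ^ k)
      (z * ∑' k : ℤ, heckeCoef q k * z ^ k) := by
    have := ((Equiv.subRight (1 : ℤ)).hasSum_iff.2 hsum.hasSum).mul_left z
    have hf : ∀ k : ℤ, heckeCoef q (k - 1) * z ^ k = z * (heckeCoef q (k - 1) * z ^ (k - 1)) := by
      intro k
      rw [zpow_sub_one₀ hz0]
      field_simp
    simp only [hf]
    exact this
  rw [theta_mul_rank hq hq0 hz] at h1
  simp only [convCoef_sub hq hq0, convCoef_eq hq hq0] at h1
  have h2 : ∑' k : ℤ, z ^ k * (heckeCoef q k - heckeCoef q (k - 1)) =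
      (1 - z) * ∑' k : ℤ, heckeCoef q k * z ^ k := by
    rw [sub_mul, one_mul, ← (hsum.hasSum.sub hshift).tsum_eq]
    refine tsum_congr fun k => ?_
    ring
  rw [h2] at h1
  exact mul_left_cancel₀ (sub_ne_zero.2 (Ne.symm hz1)) h1

/-- Terms of the Hecke-type double sum for `thetaRank`. -/
noncomputable def heckeTerm (z q : ℂ) (p : ℤ × ℤ) : ℂ :=
  z ^ p.1 * ((-1) ^ p.1 * heckeSgn p.2) * q ^ heckeExp p.1 p.2

theorem heckeTerm_bound {z q : ℂ} (hq : ‖q‖ < 1) (hz : ‖z‖ = 1) (p : ℤ × ℤ) :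
    ‖heckeTerm z q p‖ ≤ ‖q‖ ^ p.1.natAbs * ‖q‖ ^ p.2.natAbs := by
  refine le_of_eq_of_le ?_ (heckeTerm_norm hq p.1 p.2)
  simp [heckeTerm, hz]

theorem heckeBound_summable {q : ℂ} (hq : ‖q‖ < 1) :
    Summable fun p : ℤ × ℤ => ‖q‖ ^ p.1.natAbs * ‖q‖ ^ p.2.natAbs :=
  (summable_pow_natAbs (norm_nonneg q) hq).mul_of_nonneg (summable_pow_natAbs (norm_nonneg q) hq)
    (fun _ => by positivity) (fun _ => by positivity)

theorem heckeTerm_summable {z q : ℂ} (hq : ‖q‖ < 1) (hz : ‖z‖ = 1) :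
    Summable (heckeTerm z q) :=
  Summable.of_norm_bounded (heckeBound_summable hq) (heckeTerm_bound hq hz)

/-- The theta product times the rank generating function is a Hecke-type double sum. At `z = 1`
the argument fails, since it divides by `1 - z`. -/
theorem thetaRank_eq {z q : ℂ} (hq : ‖q‖ < 1) (hq0 : q ≠ 0) (hz : ‖z‖ = 1) (hz1 : z ≠ 1) :
    thetaRank z q = ∑' p : ℤ × ℤ, heckeTerm z q p := by
  rw [thetaRank_eq_conv hq hq0 hz hz1, (heckeTerm_summable hq hz).tsum_prod]
  refine tsum_congr fun k => ?_
  rw [heckeCoef, mul_assoc, ← tsum_mul_right, ← tsum_mul_left]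
  refine tsum_congr fun J => ?_
  simp only [heckeTerm]
  ring

theorem qPochInf_tendsto_arg {q x : ℂ} (hq : ‖q‖ < 1) {u : ℕ → ℂ} (hu : Tendsto u atTop (𝓝 x))
    (hb : ∀ n, ‖u n‖ ≤ 1) :
    Tendsto (fun n => qPochInf (u n) q) atTop (𝓝 (qPochInf x q)) := by
  unfold qPochInf
  simp only [sub_eq_add_neg]
  refine tendsto_tprod_one_add_of_dominated_convergence
    (summable_geometric_of_lt_one (norm_nonneg q) hq) (fun k => (hu.mul_const _).neg)
    (.of_forall fun n k => ?_)
  rw [norm_neg, norm_mul, norm_pow]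
  exact mul_le_of_le_one_left (by positivity) (hb n)

/-- The Hecke-type double sum at `z = 1`, by continuity along the unit circle. -/
theorem hecke_one {q : ℂ} (hq : ‖q‖ < 1) :
    ∑' p : ℤ × ℤ, heckeTerm 1 q p = qPochInf q q ^ 2 := by
  rcases eq_or_ne q 0 with rfl | hq0
  · rw [tsum_eq_single (0, 0)]
    · rw [show qPochInf 0 0 = 1 by simp [qPochInf]]
      simp [heckeTerm, heckeExp, heckeSgn]
    · rintro ⟨k, J⟩ h
      have := le_heckeExp k J
      have h0 : heckeExp k J ≠ 0 := by
        intro h0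
        apply h
        ext <;> simp <;> omega
      simp [heckeTerm, h0]
  have hu : Tendsto (fun n : ℕ => (1 / ((n : ℝ) + 1))) atTop (𝓝 0) :=
    tendsto_one_div_add_atTop_nhds_zero_nat
  -- Points of the unit circle that tend to `1` and differ from `1`.
  set z : ℕ → ℂ := fun n => Complex.exp ((1 / ((n : ℝ) + 1) : ℝ) * Complex.I) with hzdef
  have hz : ∀ n, ‖z n‖ = 1 := fun n => Complex.norm_exp_ofReal_mul_I _
  have hz1 : ∀ n, z n ≠ 1 := by
    intro n h
    have h2 := congrArg Complex.im h
    rw [hzdef, Complex.exp_ofReal_mul_I_im, Complex.one_im] at h2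
    have hp : (0 : ℝ) < 1 / ((n : ℝ) + 1) := by positivity
    have hle : 1 / ((n : ℝ) + 1) ≤ 1 := by
      rw [div_le_one (by positivity)]; linarith [n.cast_nonneg (α := ℝ)]
    exact (Real.sin_pos_of_pos_of_lt_pi hp (by linarith [Real.pi_gt_three])).ne' h2
  have hlim : Tendsto z atTop (𝓝 1) := by
    have hc : Continuous fun t : ℝ => Complex.exp (t * Complex.I) := by fun_prop
    have := (hc.tendsto 0).comp hu
    rw [Complex.ofReal_zero, zero_mul, Complex.exp_zero] at this
    exact this
  have hz0 : ∀ n, z n ≠ 0 := fun n => Complex.exp_ne_zero _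
  have hlim' : Tendsto (fun n => (z n)⁻¹) atTop (𝓝 1) := by
    simpa using hlim.inv₀ one_ne_zero
  have hzpow : ∀ k : ℤ, Tendsto (fun n => z n ^ k) atTop (𝓝 (1 ^ k)) := fun k =>
    hlim.zpow₀ k (Or.inl one_ne_zero)
  have hR : Tendsto (fun n => rankGF (z n) q) atTop (𝓝 (rankGF 1 q)) := by
    rw [rankGF_eq hq (by simp)]
    simp only [rankGF_eq hq (hz _)]
    refine tendsto_tsum_of_dominated_convergence (mp_summable hq)
      (fun s => (hzpow _).mul_const _) (.of_forall fun n s => ?_)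
    simp [hz]
  have hF : Tendsto (fun n => thetaRank (z n) q) atTop (𝓝 (thetaRank 1 q)) := by
    refine Tendsto.mul (Tendsto.mul (Tendsto.mul ?_ ?_) tendsto_const_nhds) hR
    · exact qPochInf_tendsto_arg hq (hlim.mul_const q) fun n => by simp [hz, hq.le]
    · rw [inv_one]
      exact qPochInf_tendsto_arg hq (hlim'.mul_const q) fun n => by simp [hz, hq.le]
  have hG : Tendsto (fun n => ∑' p : ℤ × ℤ, heckeTerm (z n) q p) atTop
      (𝓝 (∑' p : ℤ × ℤ, heckeTerm 1 q p)) :=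
    tendsto_tsum_of_dominated_convergence (heckeBound_summable hq)
      (fun p => ((hzpow p.1).mul_const _).mul_const _)
      (.of_forall fun n p => heckeTerm_bound hq (hz n) p)
  have h := tendsto_nhds_unique hG (hF.congr fun n => thetaRank_eq hq hq0 (hz n) (hz1 n))
  rw [h, thetaRank, rankGF_eq hq (by simp)]
  -- `R(1;q)` is the partition generating function, so one of the three factors cancels.
  simp only [one_zpow, one_mul, inv_one, mp_tsum hq]
  have := qPochInf_ne hq
  field_simp

/-! ### Extracting exponents congruent to 2 modulo 5 -/

/-- Collecting an absolutely convergent sum `∑ c p * q ^ E p` by the value of the exponent. -/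
theorem hasSum_fiber {ι : Type*} {E : ι → ℕ} {c : ι → ℂ} {q : ℂ}
    (h : Summable fun p => c p * q ^ E p) :
    HasSum (fun n => (∑' p, if E p = n then c p else 0) * q ^ n) (∑' p, c p * q ^ E p) := by
  set g : ι → ℕ × ι := fun p => (E p, p) with hg
  have hinj : Function.Injective g := fun p p' hpp => (Prod.ext_iff.1 hpp).2
  set f : ℕ × ι → ℂ := fun x => (if E x.2 = x.1 then c x.2 else 0) * q ^ x.1 with hf
  have h0 : ∀ x ∉ Set.range g, f x = 0 := by
    rintro ⟨n, p⟩ hx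
    have : E p ≠ n := fun hE => hx ⟨p, by simp [hg, hE]⟩
    simp [hf, this]
  have hfg : f ∘ g = fun p => c p * q ^ E p := by
    funext p; simp [hf, hg]
  have hs : HasSum f (∑' p, c p * q ^ E p) := by
    rw [← hinj.hasSum_iff h0, hfg]
    exact h.hasSum
  have := hs.prod_fiberwise (fun n => (hs.summable.prod_factor n).hasSum)
  simpa only [hf, tsum_mul_right] using this

/-- Completing the square: `12 * heckeExp k J + 1` is a binary quadratic form in `|k|` and
`|6 J + 1|`. -/
theorem heckeExp_quad (k J : ℤ) :
    12 * heckeExp k J + 1 =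
      6 * k.natAbs ^ 2 + 6 * k.natAbs * (6 * J + 1).natAbs + (6 * J + 1).natAbs ^ 2 := by
  have h2 : k.natAbs * (k.natAbs + 1) / 2 * 2 = k.natAbs * (k.natAbs + 1) :=
    Nat.div_mul_cancel (Nat.even_mul_succ_self _).two_dvd
  cases J with
  | ofNat j =>
    have : (6 * Int.ofNat j + 1).natAbs = 6 * j + 1 := by
      rw [Int.ofNat_eq_natCast]; omega
    rw [this]
    simp only [heckeExp]
    nlinarith
  | negSucc j =>
    have : (6 * Int.negSucc j + 1).natAbs = 6 * j + 5 := by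
      rw [Int.negSucc_eq]; omega
    rw [this]
    simp only [heckeExp]
    nlinarith

/-- The substitution `(k, J) ↦ (5 k, -5 J - 1)`, which multiplies both `k` and `6 J + 1` by five
up to sign. -/
def dil (p : ℤ × ℤ) : ℤ × ℤ := (5 * p.1, -5 * p.2 - 1)

theorem dil_injective : Function.Injective dil := by
  rintro ⟨k, J⟩ ⟨k', J'⟩ h
  simp only [dil, Prod.mk.injEq] at h ⊢
  omega

theorem heckeExp_dil (p : ℤ × ℤ) :
    heckeExp (dil p).1 (dil p).2 = 25 * heckeExp p.1 p.2 + 2 := by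
  have h1 := heckeExp_quad p.1 p.2
  have h2 := heckeExp_quad (dil p).1 (dil p).2
  have hK : (dil p).1.natAbs = 5 * p.1.natAbs := by simp only [dil]; omega
  have hA : (6 * (dil p).2 + 1).natAbs = 5 * (6 * p.2 + 1).natAbs := by simp only [dil]; omega
  rw [hK, hA] at h2
  nlinarith

theorem heckeSgn_dil (J : ℤ) : heckeSgn (-5 * J - 1) = -heckeSgn J := by
  cases J with
  | ofNat j =>
    have : -5 * Int.ofNat j - 1 = Int.negSucc (5 * j) := by
      rw [Int.ofNat_eq_natCast, Int.negSucc_eq]; push_cast; ring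
    rw [this]; rfl
  | negSucc j =>
    have : -5 * Int.negSucc j - 1 = Int.ofNat (5 * j + 4) := by
      rw [Int.ofNat_eq_natCast, Int.negSucc_eq]; push_cast; ring
    rw [this]; rfl

/-- If the exponent is `2` modulo `5`, the quadratic form of `heckeExp_quad` vanishes modulo
`5`. Since `-3` is not a square modulo `5`, both of its arguments are divisible by `5`. -/
theorem mem_range_dil {p : ℤ × ℤ} {n : ℕ} (h : heckeExp p.1 p.2 = 5 * n + 2) :
    p ∈ Set.range dil := by
  obtain ⟨k, J⟩ := p
  have h1 := heckeExp_quad k J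
  rw [h] at h1
  have key : ∀ x y : ZMod 5, 6 * x ^ 2 + 6 * x * y + y ^ 2 = 0 → x = 0 ∧ y = 0 := by decide
  have h2 := congrArg (Nat.cast : ℕ → ZMod 5) h1
  push_cast at h2
  have h3 := key k.natAbs (6 * J + 1).natAbs (by
    rw [← h2]
    have h5 : (5 : ZMod 5) = 0 := rfl
    linear_combination (12 * (n : ZMod 5) + 5) * h5)
  obtain ⟨hk, hJ⟩ := h3
  rw [ZMod.natCast_eq_zero_iff] at hk hJ
  refine ⟨(k / 5, -(J + 1) / 5), ?_⟩
  simp only [dil, Prod.mk.injEq]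
  omega

/-- The coefficient of `q ^ heckeExp p.1 p.2` in `heckeTerm z q p`. -/
noncomputable def heckeWeight (z : ℂ) (p : ℤ × ℤ) : ℂ := z ^ p.1 * ((-1) ^ p.1 * heckeSgn p.2)

theorem heckeWeight_dil {z : ℂ} (hz : z ^ 5 = 1) (p : ℤ × ℤ) :
    heckeWeight z (dil p) = -heckeWeight 1 p := by
  have h1 : z ^ (5 * p.1) = 1 := by
    rw [zpow_mul]; norm_cast; rw [hz, one_zpow]
  have h2 : (-1 : ℂ) ^ (5 * p.1) = (-1) ^ p.1 := by
    rw [zpow_mul]; norm_num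
  simp only [heckeWeight, dil, h1, h2, heckeSgn_dil, one_zpow, Int.cast_neg]
  ring

/-- The coefficient of `q ^ n` in the Hecke-type double sum, as a power series in `q`. -/
noncomputable def heckeSeq (z : ℂ) (n : ℕ) : ℂ :=
  ∑' p : ℤ × ℤ, if heckeExp p.1 p.2 = n then heckeWeight z p else 0

theorem heckeSeq_hasSum {z q : ℂ} (hq : ‖q‖ < 1) (hz : ‖z‖ = 1) :
    HasSum (fun n => heckeSeq z n * q ^ n) (∑' p, heckeTerm z q p) :=
  hasSum_fiber (E := fun p : ℤ × ℤ => heckeExp p.1 p.2) (c := heckeWeight z)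
    (heckeTerm_summable hq hz)

theorem heckeSeq_zero (z : ℂ) : heckeSeq z 0 = 1 := by
  rw [heckeSeq, tsum_eq_single (0, 0)]
  · simp [heckeExp, heckeWeight, heckeSgn]
  · rintro ⟨k, J⟩ hp
    rw [if_neg]
    intro h
    have := le_heckeExp k J
    apply hp
    simp only at h
    simp only [Prod.mk.injEq]
    omega

theorem heckeSeq_two_mod_five {z : ℂ} (hz : z ^ 5 = 1) (n : ℕ) :
    heckeSeq z (5 * n + 2) =
      ∑' p : ℤ × ℤ, if 5 * heckeExp p.1 p.2 = n then -heckeWeight 1 p else 0 := by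
  rw [heckeSeq, ← dil_injective.tsum_eq]
  · refine tsum_congr fun p => ?_
    rw [heckeExp_dil, heckeWeight_dil hz]
    congr 1
    simp only [eq_iff_iff]
    omega
  · intro p hp
    by_contra hr
    apply hp
    exact if_neg fun h => hr (mem_range_dil h)

/-- After the substitution `dil` the terms with exponent `5 n + 2` form the negative of the double
sum at `z = 1` in the variable `q ^ 5`, which `hecke_one` evaluates. -/
theorem heckeSeq_dissection {z q : ℂ} (hz : z ^ 5 = 1) (hq : ‖q‖ < 1) :
    ∑' n, heckeSeq z (5 * n + 2) * q ^ n = -(Jb 5 q) ^ 2 := by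
  have hq5 : ‖q ^ 5‖ < 1 := by
    rw [norm_pow]; exact pow_lt_one₀ (norm_nonneg _) hq (by norm_num)
  have hterm : ∀ p : ℤ × ℤ,
      -heckeWeight 1 p * q ^ (5 * heckeExp p.1 p.2) = -heckeTerm 1 (q ^ 5) p := by
    intro p
    rw [heckeTerm, heckeWeight, pow_mul]; ring
  have hs : Summable fun p : ℤ × ℤ => -heckeWeight 1 p * q ^ (5 * heckeExp p.1 p.2) := by
    simp only [hterm]
    exact (heckeTerm_summable hq5 (by simp)).neg
  have := (hasSum_fiber (E := fun p : ℤ × ℤ => 5 * heckeExp p.1 p.2)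
    (c := fun p => -heckeWeight 1 p) hs).tsum_eq
  simp only [heckeSeq_two_mod_five hz, this, hterm, tsum_neg, hecke_one hq5, Jb]

theorem ofScalars_radius_pos {c : ℕ → ℂ} {q : ℂ} (hq : q ≠ 0)
    (h : Summable fun n => c n * q ^ n) :
    0 < (FormalMultilinearSeries.ofScalars ℂ c).radius := by
  refine lt_of_lt_of_le ?_ ((FormalMultilinearSeries.ofScalars ℂ c).le_radius_of_tendsto
    (r := ‖q‖₊) (l := 0) ?_)
  · simpa using hq
  · have := h.tendsto_atTop_zero.norm
    simpa [FormalMultilinearSeries.ofScalars_norm] using this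

theorem powerSeries_hasFPowerSeriesAt {c : ℕ → ℂ} {q : ℂ} (hq : q ≠ 0)
    (h : Summable fun n => c n * q ^ n) :
    HasFPowerSeriesAt (fun x => ∑' n, c n * x ^ n) (FormalMultilinearSeries.ofScalars ℂ c) 0 := by
  have := (FormalMultilinearSeries.hasFPowerSeriesOnBall _
    (ofScalars_radius_pos hq h)).hasFPowerSeriesAt
  have e : (fun x => ∑' n, c n * x ^ n) = (FormalMultilinearSeries.ofScalars ℂ c).sum := by
    funext x
    exact (FormalMultilinearSeries.ofScalars_sum_eq c x).symm
  rw [e]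
  exact this

/-- Uniqueness of power series coefficients, without assuming that `∑ a n * q ^ n` converges: where
it diverges its `tsum` is `0`, but near the origin the other side is not `0`. -/
theorem powerSeries_unique {a f : ℕ → ℂ}
    (hf : ∀ q : ℂ, ‖q‖ < 1 → Summable fun n => f n * q ^ n) (hf0 : f 0 ≠ 0)
    (h : ∀ q : ℂ, ‖q‖ < 1 → q ≠ 0 → ∑' n, a n * q ^ n = ∑' n, f n * q ^ n) : a = f := by
  have hF := powerSeries_hasFPowerSeriesAt (q := 1 / 2) (by norm_num) (hf (1 / 2) (by norm_num))
  have hball : ∀ᶠ q : ℂ in 𝓝[≠] 0, ‖q‖ < 1 ∧ q ≠ 0 := by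
    refine Filter.Eventually.and ?_ self_mem_nhdsWithin
    refine mem_nhdsWithin_of_mem_nhds ?_
    simpa [Metric.ball, dist_zero_right] using Metric.ball_mem_nhds (0 : ℂ) one_pos
  have hF0 : ∑' n, f n * (0 : ℂ) ^ n ≠ 0 := by
    rw [tsum_eq_single 0 (fun n hn => by simp [hn])]
    simpa using hf0
  have hne : ∀ᶠ q : ℂ in 𝓝[≠] 0, ∑' n, f n * q ^ n ≠ 0 :=
    mem_nhdsWithin_of_mem_nhds (hF.continuousAt.eventually_ne hF0)
  obtain ⟨q₀, ⟨hq₀, hq₀0⟩, hFq₀⟩ := (hball.and hne).exists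
  have hsa : Summable fun n => a n * q₀ ^ n := by
    -- A divergent series would have `tsum` equal to `0`.
    by_contra hs
    exact hFq₀ (by rw [← h q₀ hq₀ hq₀0, tsum_eq_zero_of_not_summable hs])
  have hA := powerSeries_hasFPowerSeriesAt hq₀0 hsa
  have hev : ∀ᶠ q : ℂ in 𝓝[≠] 0, ∑' n, a n * q ^ n = ∑' n, f n * q ^ n :=
    hball.mono fun q hq => h q hq.1 hq.2
  -- The identity theorem extends the equality from the punctured neighbourhood to the origin.
  have heq := (hA.analyticAt.frequently_eq_iff_eventually_eq hF.analyticAt).1 hev.frequently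
  exact FormalMultilinearSeries.ofScalars_series_injective ℂ ℂ
    (hA.eq_formalMultilinearSeries_of_eventually hF heq)

theorem zeta5_isPrimitiveRoot : IsPrimitiveRoot zeta5 5 := by
  simpa [zeta5] using Complex.isPrimitiveRoot_exp 5 (by norm_num)

theorem U52_rank_theta_product (a : ℕ → ℂ)
    (ha : ∀ q : ℂ, ‖q‖ < 1 →
      qPochInf (zeta5 * q) q * qPochInf (zeta5⁻¹ * q) q * qPochInf q q * rankGF zeta5 q =
        ∑' n : ℕ, a n * q ^ n) :
    ∀ q : ℂ, ‖q‖ < 1 → ∑' n : ℕ, a (5 * n + 2) * q ^ n = -(Jb 5 q) ^ 2 := by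
  have hz5 : zeta5 ^ 5 = 1 := zeta5_isPrimitiveRoot.pow_eq_one
  have hz : ‖zeta5‖ = 1 := zeta5_isPrimitiveRoot.norm'_eq_one (by norm_num)
  have hz1 : zeta5 ≠ 1 := zeta5_isPrimitiveRoot.ne_one (by norm_num)
  have haf : a = heckeSeq zeta5 := by
    -- `thetaRank_eq` requires `q ≠ 0`, which is all that the uniqueness statement asks for.
    refine powerSeries_unique (fun q hq => (heckeSeq_hasSum hq hz).summable)
      (by simp [heckeSeq_zero]) fun q hq hq0 => ?_
    rw [← ha q hq, (heckeSeq_hasSum hq hz).tsum_eq, ← thetaRank_eq hq hq0 hz hz1, thetaRank]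
  intro q hq
  rw [haf]
  exact heckeSeq_dissection hz5 hq
end
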